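/- arXiv:1001.1576 — 3 statements merged into one kernel-verified Lean document; each statement's English description precedes it below -/
import Mathlib

section
/- Let I be a compact interval. For any sequence δₙ → 0⁺ and any sequence xₙ(·) of absolutely continuous functions on I that are uniformly bounded and satisfy xₙ'(t) ∈ clconv F(xₙ(t) + δₙ·B̄₁) + δₙ·B̄₁ for a.e. t ∈ I (where B̄₁ is the closed unit ball of X and clconv denotes the closed convex hull), there exists a subsequence x_{n_k}(·) converging uniformly on I to a solution x(·) of the differential inclusion x'(t) ∈ F(x(t)) on I. -/
open Set Filter Topology MeasureTheory Metric Pointwise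

namespace DI

/-- The phase space `X = ℝ^m`. -/
abbrev X (m : ℕ) := EuclideanSpace ℝ (Fin m)

variable {m : ℕ}

/-- Standing assumptions (H1)–(H2): `F x` is a nonempty convex compact set for every `x`,
and `F` is upper semicontinuous (as a set-valued map). -/
def Standing (F : X m → Set (X m)) : Prop :=
  (∀ x, (F x).Nonempty ∧ Convex ℝ (F x) ∧ IsCompact (F x)) ∧
  (∀ x, ∀ ε > 0, ∃ δ > 0, ∀ y, dist y x < δ → F y ⊆ Metric.thickening ε (F x))

/-- `γ` is a solution of the differential inclusion `x' ∈ F x` on the set `I`: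
it is an indefinite integral (hence absolutely continuous on compact subintervals)
of an integrable selection `g` with `g u ∈ F (γ u)` for a.e. `u ∈ I`. -/
def IsSolOn (F : X m → Set (X m)) (γ : ℝ → X m) (I : Set ℝ) : Prop :=
  ∃ g : ℝ → X m,
    (∀ s ∈ I, ∀ t ∈ I, IntervalIntegrable g volume s t ∧ γ t = γ s + ∫ u in s..t, g u) ∧
    (∀ᵐ u ∂(volume.restrict I), g u ∈ F (γ u))

/-- The reachable set `ℛ(t)x` of the inclusion `x' ∈ F x`. -/
def reach (F : X m → Set (X m)) (t : ℝ) (x : X m) : Set (X m) :=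
  {y | ∃ γ : ℝ → X m, IsSolOn F γ (Icc 0 t) ∧ γ 0 = x ∧ γ t = y}

/-- `ℛ(t)A`. -/
def reachSet (F : X m → Set (X m)) (t : ℝ) (A : Set (X m)) : Set (X m) :=
  ⋃ x ∈ A, reach F t x

/-- No solution starting in `B` blows up on `[0,T]`: every solution on a subinterval
`[0,s] ⊆ [0,T]` starting in `B` extends to a solution on `[0,T]`. -/
def NoBlowupUpTo (F : X m → Set (X m)) (B : Set (X m)) (T : ℝ) : Prop :=
  ∀ s ∈ Icc (0:ℝ) T, ∀ γ : ℝ → X m, IsSolOn F γ (Icc 0 s) → γ 0 ∈ B →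
    ∃ γ' : ℝ → X m, IsSolOn F γ' (Icc 0 T) ∧ EqOn γ' γ (Icc 0 s)

/-- No solution starting in `B` blows up in finite time. -/
def NoBlowup (F : X m → Set (X m)) (B : Set (X m)) : Prop :=
  ∀ T > 0, NoBlowupUpTo F B T

/-- `A` attracts `B` (in the strong sense): no solution from `B` blows up in finite
time and `d_H(ℛ(t)B, A) → 0` as `t → ∞`. -/
def Attracts (F : X m → Set (X m)) (A B : Set (X m)) : Prop :=
  NoBlowup F B ∧
  ∀ ε > 0, ∃ T : ℝ, ∀ t ≥ T, ∀ y ∈ reachSet F t B, Metric.infDist y A < ε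

/-- The attraction basin `Ω(A)`. -/
def basin (F : X m → Set (X m)) (A : Set (X m)) : Set (X m) :=
  {x | Attracts F A {x}}

/-- `A` is positively invariant. -/
def PosInvariant (F : X m → Set (X m)) (A : Set (X m)) : Prop :=
  ∀ t ≥ (0:ℝ), reachSet F t A ⊆ A

/-- `A` is invariant. -/
def Invariant (F : X m → Set (X m)) (A : Set (X m)) : Prop :=
  ∀ t ≥ (0:ℝ), reachSet F t A = A

/-- The ω-limit set `ω(A)`. -/
def omegaLim (F : X m → Set (X m)) (A : Set (X m)) : Set (X m) :=
  {y | ∃ (t : ℕ → ℝ) (p : ℕ → X m), Tendsto t atTop atTop ∧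
    (∀ n, p n ∈ reachSet F (t n) A) ∧ Tendsto p atTop (𝓝 y)}

/-- `𝒜` is an attractor: a compact set admitting a neighborhood `U` with `ω(U) = 𝒜`. -/
def IsAttractor (F : X m → Set (X m)) (𝒜 : Set (X m)) : Prop :=
  IsCompact 𝒜 ∧ ∃ U : Set (X m), 𝒜 ⊆ interior U ∧ omegaLim F U = 𝒜

/-- `O` is an attractor neighborhood of `𝒜`: a positively invariant neighborhood of `𝒜`
contained in the attraction basin `Ω(𝒜)`. -/
def IsAttractorNbhd (F : X m → Set (X m)) (𝒜 O : Set (X m)) : Prop :=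
  𝒜 ⊆ interior O ∧ PosInvariant F O ∧ O ⊆ basin F 𝒜

/-- The attraction basin of `A` in `U`: `Ω^U(A) = Ω(A) ∩ {x ∈ U : ℛ(t)x ⊆ U ∀ t ≥ 0}`. -/
def basinIn (F : X m → Set (X m)) (U A : Set (X m)) : Set (X m) :=
  basin F A ∩ {x ∈ U | ∀ t ≥ (0:ℝ), reach F t x ⊆ U}

/-- The right-hand side of the inflated inclusion:
`clconv F(x + δ B̄₁) + δ B̄₁`. -/
def inflate (F : X m → Set (X m)) (δ : ℝ) (x : X m) : Set (X m) :=
  closure (convexHull ℝ (⋃ y ∈ Metric.closedBall x δ, F y)) +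
    Metric.closedBall (0 : X m) δ

/-- `S` is weakly invariant: through every point of `S` passes a complete
solution contained in `S`. -/
def WeaklyInvariant (F : X m → Set (X m)) (S : Set (X m)) : Prop :=
  ∀ x ∈ S, ∃ γ : ℝ → X m, IsSolOn F γ univ ∧ γ 0 = x ∧ range γ ⊆ S

/-- `A` is an attractor in `𝒜`: compact, `A ⊆ 𝒜`, and `ω(U ∩ 𝒜) = A` for some
neighborhood `U` of `A`. -/
def IsAttractorIn (F : X m → Set (X m)) (𝒜 A : Set (X m)) : Prop :=
  IsCompact A ∧ A ⊆ 𝒜 ∧ ∃ U : Set (X m), A ⊆ interior U ∧ omegaLim F (U ∩ 𝒜) = A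

/-- The dual repeller `A* = {x ∈ 𝒜 : ω(x) ∖ A ≠ ∅}` of `A` in `𝒜`. -/
def dualRepeller (F : X m → Set (X m)) (𝒜 A : Set (X m)) : Set (X m) :=
  {x ∈ 𝒜 | (omegaLim F {x} \ A).Nonempty}

/-- The ω-limit set of a complete solution. -/
def omegaOf (γ : ℝ → X m) : Set (X m) :=
  {y | ∃ t : ℕ → ℝ, Tendsto t atTop atTop ∧ Tendsto (fun n => γ (t n)) atTop (𝓝 y)}

/-- The α-limit set of a complete solution. -/
def alphaOf (γ : ℝ → X m) : Set (X m) :=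
  {y | ∃ t : ℕ → ℝ, Tendsto t atTop atBot ∧ Tendsto (fun n => γ (t n)) atTop (𝓝 y)}

/-- The unstable set `W^u(S)` (within `𝒜`). -/
def unstableSet (F : X m → Set (X m)) (𝒜 S : Set (X m)) : Set (X m) :=
  {x | ∃ γ : ℝ → X m, IsSolOn F γ univ ∧ range γ ⊆ 𝒜 ∧ γ 0 = x ∧ alphaOf γ ⊆ S}

/-- `A 0 ⊆ A 1 ⊆ ⋯ ⊆ A l` is a Morse filtration of the attractor `𝒜`. -/
def IsMorseFiltration (F : X m → Set (X m)) (𝒜 : Set (X m)) (l : ℕ)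
    (A : ℕ → Set (X m)) : Prop :=
  A 0 = ∅ ∧ A l = 𝒜 ∧ (∀ k < l, A k ⊆ A (k+1)) ∧ ∀ k ≤ l, IsAttractorIn F 𝒜 (A k)

/-- `M 1, …, M l` is a Morse decomposition of the attractor `𝒜`. -/
def IsMorseDecomposition (F : X m → Set (X m)) (𝒜 : Set (X m)) (l : ℕ)
    (M : ℕ → Set (X m)) : Prop :=
  (∀ k, 1 ≤ k → k ≤ l → IsCompact (M k) ∧ M k ⊆ 𝒜) ∧
  ∃ A : ℕ → Set (X m), IsMorseFiltration F 𝒜 l A ∧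
    ∀ k, 1 ≤ k → k ≤ l → M k = A k ∩ dualRepeller F 𝒜 (A (k-1))

/-- `V` is radially unbounded (class `𝒦∞`) on the open set `U`. -/
def RadiallyUnbounded (U : Set (X m)) (V : X m → ℝ) : Prop :=
  ∀ R > (0:ℝ), ∃ K : Set (X m), K ⊆ U ∧ IsCompact K ∧ ∀ x ∈ U \ K, V x > R

/-- `V` is locally Lipschitz on `O`. -/
def LocallyLipschitzOn (O : Set (X m)) (V : X m → ℝ) : Prop :=
  ∀ x ∈ O, ∃ ε > (0:ℝ), ∃ L : NNReal, LipschitzOnWith L V (Metric.ball x ε ∩ O)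

/-- The set-valued map `F` is locally Lipschitz:
`F x ⊆ F y + L‖x - y‖ B̄₁` on compact sets. -/
def LocallyLipschitzMap (F : X m → Set (X m)) : Prop :=
  ∀ K : Set (X m), IsCompact K → ∃ L > (0:ℝ), ∀ x ∈ K, ∀ y ∈ K,
    F x ⊆ F y + Metric.closedBall (0 : X m) (L * ‖x - y‖)

/-- The Dini supderivative `D⁺_v V(x) = limsup_{τ→0⁺} (V(x+τv) - V x)/τ`. -/
noncomputable def diniSup (V : X m → ℝ) (x v : X m) : ℝ :=
  limsup (fun τ : ℝ => (V (x + τ • v) - V x) / τ) (𝓝[>] 0)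

/-- `A` is a strong deformation retract of `Y`. -/
def IsSDR (A Y : Set (X m)) : Prop :=
  A ⊆ Y ∧ ∃ H : ℝ × X m → X m, ContinuousOn H (Icc (0:ℝ) 1 ×ˢ Y) ∧
    (∀ σ ∈ Icc (0:ℝ) 1, ∀ y ∈ Y, H (σ, y) ∈ Y) ∧
    (∀ y ∈ Y, H (0, y) = y) ∧ (∀ y ∈ Y, H (1, y) ∈ A) ∧
    (∀ σ ∈ Icc (0:ℝ) 1, ∀ a ∈ A, H (σ, a) = a)

/-- `V` is a Morse–Lyapunov function of the Morse decomposition `M` of `𝒜` on the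
attraction basin `Ω(𝒜)`: continuous, constant on each Morse set, and strictly
decreasing along solutions lying in `Ω(𝒜) ∖ 𝒟`, where `𝒟 = ⋃ₖ M k`. -/
def IsMLFunction (F : X m → Set (X m)) (𝒜 : Set (X m)) (l : ℕ) (M : ℕ → Set (X m))
    (V : X m → ℝ) : Prop :=
  ContinuousOn V (basin F 𝒜) ∧
  (∀ k, 1 ≤ k → k ≤ l → ∃ c : ℝ, ∀ x ∈ M k, V x = c) ∧
  (∀ a b : ℝ, ∀ γ : ℝ → X m, IsSolOn F γ (Icc a b) →
    (∀ t ∈ Icc a b, γ t ∈ basin F 𝒜 \ ⋃ k ∈ Icc 1 l, M k) →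
    StrictAntiOn (fun t => V (γ t)) (Icc a b))

/-- A strict Morse–Lyapunov function: in addition `V(M i) < V(M j)` whenever
`i < j` and both Morse sets are nonempty. -/
def IsStrictML (F : X m → Set (X m)) (𝒜 : Set (X m)) (l : ℕ) (M : ℕ → Set (X m))
    (V : X m → ℝ) : Prop :=
  IsMLFunction F 𝒜 l M V ∧
  ∀ i j, 1 ≤ i → i < j → j ≤ l → ∀ x ∈ M i, ∀ y ∈ M j, V x < V y

/-!
Near a point `x₀` the perturbed right-hand sides `Gₙ` eventually take their values in any prescribed
neighbourhood of `F x₀`. On a compact set of states this bounds all velocities, so the approximate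
solutions are eventually equi-Lipschitz and Arzelà–Ascoli provides a Lipschitz uniform limit `x`.
Where `x` is differentiable, its difference quotients over short intervals are limits of mean
velocities of the approximate solutions. For every `ε > 0` these eventually lie in the closed convex
set `cthickening ε (F (x t))`, hence `x' t ∈ F (x t)`.
-/

open scoped NNReal
open Bornology

section OuterConvergence

variable {ι κ α β E : Type*} [TopologicalSpace α] [PseudoMetricSpace β]
  [SeminormedAddCommGroup E] [NormedSpace ℝ E]

/-- Outer convergence of the set-valued maps `G i` to `F` along `l`, locally uniform in the
argument: for `i` far along `l` and `y` near `x`, the set `G i y` lies in a given thickening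
of `F x`. For a constant family and `l ≠ ⊥` this is upper semicontinuity of `F` in the metric
sense. -/
def TendstoOuter (G : ι → α → Set β) (l : Filter ι) (F : α → Set β) : Prop :=
  ∀ x, ∀ ε > 0, ∀ᶠ p in l ×ˢ 𝓝 x, G p.1 p.2 ⊆ thickening ε (F x)

theorem TendstoOuter.comp {G : ι → α → Set β} {F : α → Set β} {l : Filter ι} {l' : Filter κ}
    {φ : κ → ι} (hG : TendstoOuter G l F) (hφ : Tendsto φ l' l) :
    TendstoOuter (fun k => G (φ k)) l' F :=
  fun x ε hε => (hφ.prodMap tendsto_id).eventually (hG x ε hε)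

theorem TendstoOuter.exists_isBounded_of_isCompact {G : ι → α → Set β} {F : α → Set β}
    {l : Filter ι} (hG : TendstoOuter G l F) (hF : ∀ x, IsBounded (F x)) {K : Set α}
    (hK : IsCompact K) :
    ∃ B, IsBounded B ∧ ∀ᶠ i in l, ∀ y ∈ K, G i y ⊆ B := by
  refine hK.induction_on (p := fun s => ∃ B, IsBounded B ∧ ∀ᶠ i in l, ∀ y ∈ s, G i y ⊆ B)
    ⟨∅, isBounded_empty, by simp⟩ ?_ ?_ fun x _ => ?_
  · rintro s t hst ⟨B, hB, ht⟩
    exact ⟨B, hB, ht.mono fun i hi y hy => hi y (hst hy)⟩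
  · rintro s t ⟨B, hB, hs⟩ ⟨B', hB', ht⟩
    refine ⟨B ∪ B', hB.union hB', ?_⟩
    filter_upwards [hs, ht] with i hsi hti
    rintro y (hy | hy)
    · exact (hsi y hy).trans subset_union_left
    · exact (hti y hy).trans subset_union_right
  · obtain ⟨p, hp, q, hq, hpq⟩ := eventually_prod_iff.1 (hG x 1 one_pos)
    exact ⟨{y | q y}, mem_nhdsWithin_of_mem_nhds hq, thickening 1 (F x), (hF x).thickening,
      hp.mono fun i hi y hy => hpq hi hy⟩

theorem closure_convexHull_add_closedBall_subset_thickening {S C : Set E} {δ ε η : ℝ}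
    (hC : Convex ℝ C) (hS : S ⊆ thickening η C) (hδ : δ < ε) :
    closure (convexHull ℝ S) + closedBall 0 δ ⊆ thickening (ε + η) C :=
  calc (closure (convexHull ℝ S) + closedBall 0 δ : Set E)
      ⊆ closure (convexHull ℝ S) + ball 0 ε := add_subset_add_left (closedBall_subset_ball hδ)
    _ = thickening ε (convexHull ℝ S) := by rw [add_ball_zero, thickening_closure]
    _ ⊆ thickening ε (thickening η C) :=
      thickening_subset_of_subset ε (convexHull_min hS (hC.thickening η))
    _ ⊆ thickening (ε + η) C := thickening_thickening_subset ε η C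

theorem tendstoOuter_inflate {F : X m → Set (X m)} (hF : Standing F) {δ : ι → ℝ} {l : Filter ι}
    (hδ : Tendsto δ l (𝓝 0)) : TendstoOuter (fun i => inflate F (δ i)) l F := by
  intro x ε hε
  obtain ⟨ρ, hρ, husc⟩ := hF.2 x (ε / 2) (half_pos hε)
  have hδ_small : ∀ᶠ i in l, δ i < ρ / 2 ∧ δ i < ε / 2 :=
    (hδ.eventually_lt_const (half_pos hρ)).and (hδ.eventually_lt_const (half_pos hε))
  filter_upwards [hδ_small.prod_mk (ball_mem_nhds x (half_pos hρ))]
    with ⟨i, y⟩ ⟨⟨hiρ, hiε⟩, hy⟩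
  have hvalues : ⋃ z ∈ closedBall y (δ i), F z ⊆ thickening (ε / 2) (F x) := by
    refine iUnion₂_subset fun z hz => husc z ?_
    linarith [dist_triangle z y x, mem_closedBall.1 hz, mem_ball.1 hy]
  rw [← add_halves ε]
  exact closure_convexHull_add_closedBall_subset_thickening (hF.1 x).2.1 hvalues hiε

end OuterConvergence

section Solutions

variable {ι E : Type*} [NormedAddCommGroup E] [NormedSpace ℝ E]

/-- `γ` solves the differential inclusion `γ' ∈ F γ` on `I`: the notion `IsSolOn`, encoded in the
same way, for curves in an arbitrary real normed space. -/
def IsIntegralSolOn (F : E → Set E) (γ : ℝ → E) (I : Set ℝ) : Prop :=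
  ∃ g : ℝ → E,
    (∀ s ∈ I, ∀ t ∈ I, IntervalIntegrable g volume s t ∧ γ t = γ s + ∫ u in s..t, g u) ∧
    (∀ᵐ u ∂(volume.restrict I), g u ∈ F (γ u))

theorem IsIntegralSolOn.lipschitzOnWith {F : E → Set E} {γ : ℝ → E} {I : Set ℝ} {L : ℝ≥0}
    (hγ : IsIntegralSolOn F γ I) (hI : I.OrdConnected)
    (hL : ∀ u ∈ I, F (γ u) ⊆ closedBall 0 L) : LipschitzOnWith L γ I := by
  obtain ⟨g, hg, hgF⟩ := hγ
  refine LipschitzOnWith.of_dist_le_mul fun t ht s hs => ?_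
  rw [dist_eq_norm, (hg s hs t ht).2, add_sub_cancel_left, Real.dist_eq]
  refine intervalIntegral.norm_integral_le_of_norm_le_const_ae ?_
  filter_upwards [(ae_restrict_iff' hI.measurableSet).1 hgF] with u hgu hu
  have huI : u ∈ I := hI.uIcc_subset hs ht (uIoc_subset_uIcc hu)
  exact mem_closedBall_zero_iff.1 (hL u huI (hgu huI))

theorem IsIntegralSolOn.slope_mem [CompleteSpace E] {F : E → Set E} {γ : ℝ → E} {I : Set ℝ}
    {s t : ℝ} {K : Set E} (hγ : IsIntegralSolOn F γ I) (hst : s < t) (hI : Icc s t ⊆ I)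
    (hK : Convex ℝ K) (hK' : IsClosed K) (hFK : ∀ u ∈ Icc s t, F (γ u) ⊆ K) :
    slope γ s t ∈ K := by
  obtain ⟨g, hg, hgF⟩ := hγ
  obtain ⟨hint, hγt⟩ := hg s (hI (left_mem_Icc.2 hst.le)) t (hI (right_mem_Icc.2 hst.le))
  have hgK : ∀ᵐ u ∂(volume.restrict (Ioc s t)), g u ∈ K := by
    filter_upwards [ae_restrict_of_ae_restrict_of_subset (Ioc_subset_Icc_self.trans hI) hgF,
      ae_restrict_mem measurableSet_Ioc] with u hu hust
    exact hFK u (Ioc_subset_Icc_self hust) hu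
  have hslope : slope γ s t = ⨍ u in Ioc s t, g u := by
    rw [slope_def_module, hγt, add_sub_cancel_left, ← uIoc_of_le hst.le, interval_average_eq]
  rw [hslope]
  exact hK.set_average_mem hK' (by simp [hst]) (by simp) hgK
    ((intervalIntegrable_iff_integrableOn_Ioc_of_le hst.le).1 hint)

theorem deriv_mem_of_tendstoUniformlyOn [CompleteSpace E] {l : Filter ι} [l.NeBot]
    {G : ι → E → Set E} {F : E → Set E} {γ : ι → ℝ → E} {x : ℝ → E} {I : Set ℝ} {t : ℝ}
    (hG : TendstoOuter G l F) (hγ : ∀ i, IsIntegralSolOn (G i) (γ i) I)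
    (hlim : TendstoUniformlyOn γ x l I) (hI : I ∈ 𝓝 t) (hx : DifferentiableAt ℝ x t)
    (hconv : Convex ℝ (F (x t))) (hclosed : IsClosed (F (x t))) : deriv x t ∈ F (x t) := by
  rw [← hclosed.closure_eq, closure_eq_iInter_cthickening]
  refine mem_iInter₂.2 fun ε hε => ?_
  have hγ_lim : Tendsto (fun p : ι × ℝ => γ p.1 p.2) (l ×ˢ 𝓝 t) (𝓝 (x t)) :=
    TendstoUniformlyOn.tendsto_comp (s := I) (fun u hu => tendsto_fst.eventually (hlim u hu))
      hx.continuousAt.continuousWithinAt (by rw [nhdsWithin_eq_nhds.2 hI]; exact tendsto_snd)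
  have hvelocity : ∀ᶠ p in l ×ˢ 𝓝 t, G p.1 (γ p.1 p.2) ⊆ cthickening ε (F (x t)) :=
    ((tendsto_fst.prodMk hγ_lim).eventually (hG (x t) ε hε)).mono fun _ hp =>
      hp.trans (thickening_subset_cthickening ε _)
  obtain ⟨P, hP, Q, hQ, hPQ⟩ := eventually_prod_iff.1 hvelocity
  have hIcc : ∀ᶠ s in 𝓝[>] t, Icc t s ⊆ I ∩ {u | Q u} :=
    ((tendsto_const_nhds.Icc tendsto_id).eventually
      (eventually_smallSets_subset.2 (inter_mem hI hQ))).filter_mono nhdsWithin_le_nhds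
  refine isClosed_cthickening.mem_of_tendsto
    (hx.hasDerivAt.tendsto_slope.mono_left (nhdsGT_le_nhdsNE t)) ?_
  filter_upwards [hIcc, self_mem_nhdsWithin] with s hsIcc hts
  obtain ⟨hsI, hsQ⟩ := subset_inter_iff.1 hsIcc
  have hslope : Tendsto (fun i => slope (γ i) t s) l (𝓝 (slope x t s)) := by
    simp only [slope_def_module]
    exact ((hlim.tendsto_at (hsI (right_mem_Icc.2 hts.le))).sub
      (hlim.tendsto_at (hsI (left_mem_Icc.2 hts.le)))).const_smul _
  refine isClosed_cthickening.mem_of_tendsto hslope (hP.mono fun i hi => ?_)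
  exact (hγ i).slope_mem hts hsI (hconv.cthickening ε) isClosed_cthickening
    fun u hu => hPQ hi (hsQ hu)

end Solutions

section LipschitzCurves

variable {E : Type*} [NormedAddCommGroup E] [NormedSpace ℝ E] [FiniteDimensional ℝ E]
  {x : ℝ → E} {L : ℝ≥0}

theorem intervalIntegrable_deriv_of_lipschitzWith (hx : LipschitzWith L x) (s t : ℝ) :
    IntervalIntegrable (deriv x) volume s t :=
  (intervalIntegrable_const (c := (L : ℝ))).mono_fun (aestronglyMeasurable_deriv x _)
    (Eventually.of_forall fun u => by simpa using norm_deriv_le_of_lipschitz hx)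

theorem integral_deriv_eq_sub_of_lipschitzWith (hx : LipschitzWith L x) (s t : ℝ) :
    ∫ u in s..t, deriv x u = x t - x s := by
  refine (SeparatingDual.eq_iff_forall_dual_eq (R := ℝ)).2 fun p => ?_
  have hpx : LipschitzWith (‖p‖₊ * L) (fun u => p (x u)) := p.lipschitz.comp hx
  calc p (∫ u in s..t, deriv x u)
      = ∫ u in s..t, p (deriv x u) :=
        (p.intervalIntegral_comp_comm (intervalIntegrable_deriv_of_lipschitzWith hx s t)).symm
    _ = ∫ u in s..t, deriv (fun u => p (x u)) u := by
        refine intervalIntegral.integral_congr_ae ?_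
        filter_upwards [hx.ae_differentiableAt_real] with u hu _
        exact (p.hasFDerivAt.comp_hasDerivAt u hu.hasDerivAt).deriv.symm
    _ = p (x t) - p (x s) :=
        hpx.lipschitzOnWith.absolutelyContinuousOnInterval.integral_deriv_eq_sub
    _ = p (x t - x s) := (map_sub p _ _).symm

theorem isIntegralSolOn_of_lipschitzWith {F : E → Set E} {I : Set ℝ} (hx : LipschitzWith L x)
    (hxF : ∀ᵐ u ∂(volume.restrict I), deriv x u ∈ F (x u)) : IsIntegralSolOn F x I :=
  ⟨deriv x, fun s _ t _ => ⟨intervalIntegrable_deriv_of_lipschitzWith hx s t, by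
    rw [integral_deriv_eq_sub_of_lipschitzWith hx, add_sub_cancel]⟩, hxF⟩

end LipschitzCurves

section Compactness

theorem exists_subseq_tendstoUniformly_of_lipschitzWith {α β : Type*} [PseudoMetricSpace α]
    [CompactSpace α] [MetricSpace β] {K : Set β} {L : ℝ≥0} {f : ℕ → α → β} (hK : IsCompact K)
    (hf : ∀ n, LipschitzWith L (f n)) (hfK : ∀ n a, f n a ∈ K) :
    ∃ φ : ℕ → ℕ, StrictMono φ ∧ ∃ g : α → β, LipschitzWith L g ∧
      TendstoUniformly (fun k => f (φ k)) g atTop := by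
  let F : ℕ → BoundedContinuousFunction α β :=
    fun n => BoundedContinuousFunction.mkOfCompact ⟨f n, (hf n).continuous⟩
  have hcompact : IsCompact (closure (range F)) := by
    refine BoundedContinuousFunction.arzela_ascoli K hK _ ?_
      (LipschitzWith.uniformEquicontinuous _ L ?_).equicontinuous
    · rintro _ a ⟨n, rfl⟩
      exact hfK n a
    · rintro ⟨_, n, rfl⟩
      exact hf n
  obtain ⟨g, -, φ, hφ, hg⟩ := hcompact.tendsto_subseq fun n => subset_closure (mem_range_self n)
  have hunif : TendstoUniformly (fun k => f (φ k)) g atTop :=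
    BoundedContinuousFunction.tendsto_iff_tendstoUniformly.1 hg
  refine ⟨φ, hφ, g, ?_, hunif⟩
  exact (isClosed_setOfPred_lipschitzWith L).mem_of_tendsto
    (tendsto_pi_nhds.2 hunif.tendsto_at) (Eventually.of_forall fun k => hf (φ k))

theorem exists_subseq_tendstoUniformlyOn_of_lipschitzOnWith {β : Type*} [MetricSpace β]
    {K : Set β} {L : ℝ≥0} {a b : ℝ} {f : ℕ → ℝ → β} (hab : a ≤ b) (hK : IsCompact K)
    (hf : ∀ n, LipschitzOnWith L (f n) (Icc a b)) (hfK : ∀ n, MapsTo (f n) (Icc a b) K) :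
    ∃ φ : ℕ → ℕ, StrictMono φ ∧ ∃ g : ℝ → β, LipschitzWith L g ∧
      TendstoUniformlyOn (fun k => f (φ k)) g atTop (Icc a b) := by
  obtain ⟨φ, hφ, g, hg, hlim⟩ := exists_subseq_tendstoUniformly_of_lipschitzWith hK
    (fun n => (hf n).to_restrict) (fun n u => hfK n u.2)
  refine ⟨φ, hφ, IccExtend hab g, ?_, ?_⟩
  · simpa only [mul_one] using! hg.comp (LipschitzWith.projIcc hab)
  · simpa only [tendstoUniformlyOn_iff_tendstoUniformly_comp_coe, Function.comp_def, IccExtend_val]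
      using! hlim

end Compactness

theorem approximate_solutions_converge_general {E : Type*} [NormedAddCommGroup E]
    [NormedSpace ℝ E] [FiniteDimensional ℝ E] {F : E → Set E} {G : ℕ → E → Set E}
    (hF : ∀ x, Convex ℝ (F x) ∧ IsCompact (F x)) (hG : TendstoOuter G atTop F)
    {a b : ℝ} (hab : a ≤ b) {xs : ℕ → ℝ → E}
    (hsol : ∀ n, IsIntegralSolOn (G n) (xs n) (Icc a b))
    (hbdd : ∃ C : ℝ, ∀ n, ∀ t ∈ Icc a b, ‖xs n t‖ ≤ C) :
    ∃ φ : ℕ → ℕ, StrictMono φ ∧ ∃ x : ℝ → E, IsIntegralSolOn F x (Icc a b) ∧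
      TendstoUniformlyOn (fun k => xs (φ k)) x atTop (Icc a b) := by
  obtain ⟨C, hC⟩ := hbdd
  have hmaps : ∀ n, MapsTo (xs n) (Icc a b) (closedBall 0 C) :=
    fun n t ht => mem_closedBall_zero_iff.2 (hC n t ht)
  obtain ⟨B, hB, hGB⟩ := hG.exists_isBounded_of_isCompact (fun x => (hF x).2.isBounded)
    (isCompact_closedBall (0 : E) C)
  obtain ⟨L, hL, hBL⟩ := hB.subset_closedBall_lt 0 0
  lift L to ℝ≥0 using hL.le
  obtain ⟨N, hN⟩ := eventually_atTop.1 hGB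
  have hlip : ∀ n, LipschitzOnWith L (xs (n + N)) (Icc a b) := fun n =>
    (hsol (n + N)).lipschitzOnWith ordConnected_Icc fun u hu =>
      (hN _ (Nat.le_add_left N n) _ (hmaps _ hu)).trans hBL
  obtain ⟨ψ, hψ, x, hx, hlim⟩ := exists_subseq_tendstoUniformlyOn_of_lipschitzOnWith hab
    (isCompact_closedBall 0 C) hlip (fun n => hmaps (n + N))
  have hφ : StrictMono fun k => ψ k + N := hψ.add_const N
  refine ⟨fun k => ψ k + N, hφ, x, isIntegralSolOn_of_lipschitzWith hx ?_, hlim⟩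
  rw [← Measure.restrict_congr_set Ioo_ae_eq_Icc]
  filter_upwards [ae_restrict_of_ae hx.ae_differentiableAt_real,
    ae_restrict_mem measurableSet_Ioo] with t hd ht
  exact deriv_mem_of_tendstoUniformlyOn (hG.comp hφ.tendsto_atTop) (fun k => hsol (ψ k + N)) hlim
    (Icc_mem_nhds ht.1 ht.2) hd (hF (x t)).1 (hF (x t)).2.isClosed

/-- Lemma 2.1: uniform-limit compactness of approximate solutions.
Any uniformly bounded sequence of solutions of the inflated inclusions
`x' ∈ clconv F(x + δₙ B̄₁) + δₙ B̄₁` with `δₙ → 0⁺` on a compact interval has a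
subsequence converging uniformly to a solution of `x' ∈ F x`. -/
theorem approximate_solutions_converge {m : ℕ} (F : X m → Set (X m)) (hF : Standing F)
    (a b : ℝ) (hab : a ≤ b)
    (δ : ℕ → ℝ) (hδpos : ∀ n, 0 < δ n) (hδ : Tendsto δ atTop (𝓝 0))
    (xs : ℕ → ℝ → X m)
    (hsol : ∀ n, IsSolOn (inflate F (δ n)) (xs n) (Icc a b))
    (hbdd : ∃ C : ℝ, ∀ n, ∀ t ∈ Icc a b, ‖xs n t‖ ≤ C) :
    ∃ φ : ℕ → ℕ, StrictMono φ ∧ ∃ x : ℝ → X m, IsSolOn F x (Icc a b) ∧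
      TendstoUniformlyOn (fun k => xs (φ k)) x atTop (Icc a b) :=
  approximate_solutions_converge_general (fun x => (hF.1 x).2) (tendstoOuter_inflate hF hδ)
    hab hsol hbdd

end DI
end

section
/- Let 𝒜 be an attractor of the differential inclusion x' ∈ F(x) and let A ⊆ 𝒜 be an attractor in 𝒜 (i.e., there exists a neighborhood U of A with ω(U ∩ 𝒜) = A). Then A is an attractor of the differential inclusion in X. -/
open Set Filter Topology MeasureTheory Metric Pointwise

namespace DI

variable {m : ℕ}

/-!
Write `𝒜 = ω(U)` and `A = ω(V ∩ 𝒜)`. Two limit arguments, both resting on the compactness of the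
set of solutions with values in a compact set `K`, carry the proof. First, compact `ω`-limit sets
are negatively invariant, and those contained in the set generating them are also positively
invariant; this applies to `A`. Second, if solutions start in `U`, stay in `K` and last longer and
longer, then their endpoints accumulate in `𝒜`, and so do their positions any fixed time `s`
earlier; hence a limit of the endpoints lies in `ℛ(s)(K ∩ 𝒜)` for every `s`, thus in `ω(K ∩ 𝒜)`,
which is contained in `A` as soon as `K ⊆ V`.

With `K` a closed `ε`-neighborhood of `A` inside `V`, this makes `A` stable: if solutions started
closer and closer to `A` left `K`, their first exit points would accumulate in `A`, because of the
second argument when the exit times are unbounded, and because of the positive invariance of `A`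
when they converge. So all solutions from some `δ`-neighborhood of `A` stay in `K`, and the second
argument identifies the `ω`-limit set of this neighborhood with `A`.
-/

section Topology

variable {ι α : Type*}

theorem exists_tendsto_of_eventually_mem_isCompact [TopologicalSpace α] {K : Set α}
    (hK : IsCompact K) (l : Ultrafilter ι) {f : ι → α} (hf : ∀ᶠ i in l, f i ∈ K) :
    ∃ x ∈ K, Tendsto f l (𝓝 x) :=
  hK.ultrafilter_le_nhds' (l.map f) hf

theorem tendsto_atTop_or_exists_tendsto_nhds [LinearOrder α] [TopologicalSpace α]
    [CompactIccSpace α] (l : Ultrafilter ι) {f : ι → α} {a : α} (hf : ∀ᶠ i in l, a ≤ f i) :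
    Tendsto f l atTop ∨ ∃ s, Tendsto f l (𝓝 s) := by
  refine or_iff_not_imp_left.2 fun h => ?_
  obtain ⟨b, hb⟩ : ∃ b, ∀ᶠ i in l, f i < b := by
    simpa only [Filter.tendsto_atTop, not_forall, ← Ultrafilter.eventually_not, not_le] using h
  obtain ⟨s, -, hs⟩ := exists_tendsto_of_eventually_mem_isCompact (isCompact_Icc (a := a) (b := b))
    l (hf.and (hb.mono fun _ => le_of_lt))
  exact ⟨s, hs⟩

theorem exists_forall_tendsto_of_lipschitzWith {β : Type*} [PseudoMetricSpace α]
    [PseudoMetricSpace β] {K : Set β} (hK : IsCompact K) (l : Ultrafilter ι) {f : ι → α → β}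
    {M : NNReal} (hf : ∀ᶠ i in l, LipschitzWith M (f i)) (hfK : ∀ᶠ i in l, ∀ x, f i x ∈ K) :
    ∃ g : α → β, ∀ (u : ι → α) (x : α), Tendsto u l (𝓝 x) →
      Tendsto (fun i => f i (u i)) l (𝓝 (g x)) := by
  choose g _ hg using fun x => exists_tendsto_of_eventually_mem_isCompact hK l
    (hfK.mono fun _ h => h x)
  refine ⟨g, fun u x hu => (hg x).congr_dist ?_⟩
  have hbound : Tendsto (fun i => M * dist x (u i)) l (𝓝 0) := by
    simpa using ((tendsto_const_nhds (x := x)).dist hu).const_mul (M : ℝ)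
  exact squeeze_zero' (Eventually.of_forall fun _ => dist_nonneg)
    (hf.mono fun i hi => hi.dist_le_mul x (u i)) hbound

theorem lipschitzOnWith_of_tendsto {β : Type*} [PseudoEMetricSpace α] [PseudoEMetricSpace β]
    {l : Filter ι} [l.NeBot] {f : ι → α → β} {g : α → β} {K : NNReal} {s : Set α}
    (hf : ∀ᶠ i in l, LipschitzOnWith K (f i) s)
    (hlim : ∀ x ∈ s, Tendsto (fun i => f i x) l (𝓝 (g x))) : LipschitzOnWith K g s :=
  fun x hx y hy => le_of_tendsto ((hlim x hx).edist (hlim y hy)) (hf.mono fun _ h => h hx hy)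

theorem exists_eq_and_forall_uIcc_le [LinearOrder α] [TopologicalSpace α] [OrderClosedTopology α]
    {f : ℝ → α} {a b : ℝ} {c : α} (hf : ContinuousOn f (uIcc a b)) (ha : f a ≤ c) (hb : c ≤ f b) :
    ∃ u ∈ uIcc a b, f u = c ∧ ∀ v ∈ uIcc a u, f v ≤ c := by
  have hcompact : IsCompact (uIcc a b ∩ f ⁻¹' Ici c) :=
    isCompact_uIcc.of_isClosed_subset (hf.preimage_isClosed_of_isClosed isClosed_Icc isClosed_Ici)
      inter_subset_left
  obtain ⟨u, ⟨hu, hcu⟩, hmin⟩ := hcompact.exists_isMinOn ⟨b, right_mem_uIcc, hb⟩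
    (continuous_id.dist (continuous_const (y := a))).continuousOn
  have hsub : uIcc a u ⊆ uIcc a b := uIcc_subset_uIcc_left hu
  have heq : ∀ v ∈ uIcc a u, c ≤ f v → v = u := fun v hv hcv => by
    have hle : |u - a| ≤ |v - a| := hmin ⟨hsub hv, hcv⟩
    rcases le_total a u with h | h
    · rw [uIcc_of_le h, mem_Icc] at hv
      rw [abs_of_nonneg (sub_nonneg.2 h), abs_of_nonneg (sub_nonneg.2 hv.1)] at hle
      linarith
    · rw [uIcc_of_ge h, mem_Icc] at hv
      rw [abs_of_nonpos (sub_nonpos.2 h), abs_of_nonpos (sub_nonpos.2 hv.2)] at hle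
      linarith
  obtain ⟨w, hw, hwc⟩ := intermediate_value_uIcc (hf.mono hsub) (Icc_subset_uIcc ⟨ha, hcu⟩)
  have hfu : f u = c := heq w hw hwc.ge ▸ hwc
  refine ⟨u, hu, hfu, fun v hv => ?_⟩
  by_contra! hcv
  exact hcv.ne' (heq v hv hcv.le ▸ hfu)

theorem exists_infEDist_eq_and_mapsTo_cthickening [PseudoEMetricSpace α] {A : Set α} {γ : ℝ → α}
    {a b ε : ℝ} (hγ : ContinuousOn γ (Icc a b)) (ha : γ a ∈ cthickening ε A)
    (hexit : ¬MapsTo γ (Icc a b) (cthickening ε A)) :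
    ∃ u ∈ Icc a b, infEDist (γ u) A = ENNReal.ofReal ε ∧ MapsTo γ (Icc a u) (cthickening ε A) := by
  obtain ⟨t, ht, htA⟩ : ∃ t ∈ Icc a b, γ t ∉ cthickening ε A := by
    simpa only [MapsTo, not_forall, exists_prop] using hexit
  have hsub : uIcc a t ⊆ Icc a b := ordConnected_Icc.uIcc_subset ⟨le_rfl, ht.1.trans ht.2⟩ ht
  obtain ⟨u, hu, heq, hle⟩ := exists_eq_and_forall_uIcc_le
    (continuous_infEDist.comp_continuousOn (hγ.mono hsub)) ha (not_le.1 htA).le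
  refine ⟨u, hsub hu, heq, fun v hv => hle v ?_⟩
  rwa [uIcc_of_le (hsub hu).1]

theorem mem_closure_of_tendsto_of_mem_thickening [PseudoEMetricSpace α] {A : Set α} {l : Filter ι}
    [l.NeBot] {f : ι → α} {x : α} {δ : ι → ℝ} (hδ : Tendsto δ l (𝓝 0)) (hf : Tendsto f l (𝓝 x))
    (hfA : ∀ᶠ i in l, f i ∈ thickening (δ i) A) : x ∈ closure A := by
  have hδ₀ : Tendsto (fun i => ENNReal.ofReal (δ i)) l (𝓝 0) := by
    simpa using ENNReal.tendsto_ofReal hδ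
  rw [mem_closure_iff_infEDist_zero, ← nonpos_iff_eq_zero]
  exact le_of_tendsto_of_tendsto ((continuous_infEDist.tendsto x).comp hf) hδ₀
    (hfA.mono fun _ h => h.le)

theorem exists_forall_norm_le_of_upperHemicontinuous {E : Type*} [TopologicalSpace α]
    [SeminormedAddCommGroup E] {F : α → Set E} (hF : UpperHemicontinuous F)
    (hbdd : ∀ x, Bornology.IsBounded (F x)) {K : Set α} (hK : IsCompact K) :
    ∃ M : NNReal, ∀ x ∈ K, ∀ v ∈ F x, ‖v‖ ≤ M := by
  refine hK.induction_on ⟨0, by simp⟩ (fun s t hst ⟨M, hM⟩ => ⟨M, fun x hx => hM x (hst hx)⟩)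
    (fun s t ⟨M, hM⟩ ⟨N, hN⟩ => ⟨max M N, ?_⟩) fun x _ => ?_
  · rintro x (hx | hx) v hv
    · exact (hM x hx v hv).trans (le_max_left _ _)
    · exact (hN x hx v hv).trans (le_max_right _ _)
  · obtain ⟨M, hM⟩ := ((hbdd x).thickening (δ := 1)).exists_norm_le
    refine ⟨_, mem_nhdsWithin_of_mem_nhds (hF.forall_isOpen x _
      isOpen_thickening (self_subset_thickening one_pos _)), M.toNNReal, fun y hy v hv => ?_⟩
    exact (hM v (hy hv)).trans (Real.le_coe_toNNReal M)

end Topology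

section Calculus

variable {E : Type*} [NormedAddCommGroup E] [NormedSpace ℝ E]

theorem intervalIntegrable_deriv_of_lipschitzWith_s5 [FiniteDimensional ℝ E] {f : ℝ → E} {K : NNReal}
    (hf : LipschitzWith K f) (a b : ℝ) : IntervalIntegrable (deriv f) volume a b :=
  (intervalIntegrable_const (c := (K : ℝ))).mono_fun
    (aestronglyMeasurable_deriv f _)
    (Eventually.of_forall fun x => by simpa using norm_deriv_le_of_lipschitz hf (x₀ := x))

theorem integral_deriv_eq_sub_of_lipschitzWith_s5 [FiniteDimensional ℝ E] {f : ℝ → E} {K : NNReal}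
    (hf : LipschitzWith K f) (a b : ℝ) : ∫ u in a..b, deriv f u = f b - f a := by
  refine (SeparatingDual.eq_iff_forall_dual_eq (R := ℝ)).2 fun φ => ?_
  have hderiv : ∀ᵐ u, u ∈ uIoc a b → φ (deriv f u) = deriv (φ ∘ f) u := by
    filter_upwards [hf.ae_differentiableAt_real] with u hu _
    exact (φ.hasFDerivAt.comp_hasDerivAt u hu.hasDerivAt).deriv.symm
  calc φ (∫ u in a..b, deriv f u)
      = ∫ u in a..b, φ (deriv f u) :=
        (φ.intervalIntegral_comp_comm (intervalIntegrable_deriv_of_lipschitzWith_s5 hf a b)).symm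
    _ = ∫ u in a..b, deriv (φ ∘ f) u := intervalIntegral.integral_congr_ae hderiv
    _ = φ (f b) - φ (f a) := (φ.lipschitz.comp hf).lipschitzOnWith
        |>.absolutelyContinuousOnInterval.integral_deriv_eq_sub
    _ = φ (f b - f a) := (map_sub φ _ _).symm

theorem slope_mem_of_forall_ae_mem {f g : ℝ → E} [CompleteSpace E] {a b : ℝ} (hab : a < b)
    {C : Set E} (hconv : Convex ℝ C) (hclosed : IsClosed C) (hg : IntervalIntegrable g volume a b)
    (hfg : f b = f a + ∫ u in a..b, g u) (hgC : ∀ᵐ u ∂volume.restrict (Icc a b), g u ∈ C) :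
    slope f a b ∈ C := by
  have havg : ⨍ u in a..b, g u ∈ C := by
    rw [uIoc_of_le hab.le]
    exact hconv.set_average_mem hclosed (by simp [hab]) (by simp)
      (ae_restrict_of_ae_restrict_of_subset Ioc_subset_Icc_self hgC) hg.1
  rwa [slope_def_module, hfg, add_sub_cancel_left, ← interval_average_eq]

end Calculus

/-- A set-valued map with convex compact values that is upper hemicontinuous (a "cusco" map):
the standing assumptions (H1)–(H2), except that empty values are allowed. -/
structure IsCusco {α E : Type*} [TopologicalSpace α] [TopologicalSpace E] [AddCommGroup E]
    [Module ℝ E] (F : α → Set E) : Prop where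
  convex : ∀ x, Convex ℝ (F x)
  isCompact : ∀ x, IsCompact (F x)
  upperHemicontinuous : UpperHemicontinuous F

theorem Standing.isCusco {F : X m → Set (X m)} (hF : Standing F) : IsCusco F where
  convex x := (hF.1 x).2.1
  isCompact x := (hF.1 x).2.2
  upperHemicontinuous := UpperHemicontinuous.of_forall_isOpen fun x U hU hFU => by
    obtain ⟨ε, hε, hεU⟩ := (hF.1 x).2.2.exists_thickening_subset_open hU hFU
    obtain ⟨δ, hδ, hδF⟩ := hF.2 x ε hε
    filter_upwards [ball_mem_nhds x hδ] with y hy using (hδF y hy).trans hεU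

theorem IsCusco.exists_forall_norm_le {α E : Type*} [TopologicalSpace α] [NormedAddCommGroup E]
    [NormedSpace ℝ E] {F : α → Set E} (hF : IsCusco F) {K : Set α} (hK : IsCompact K) :
    ∃ M : NNReal, ∀ x ∈ K, ∀ v ∈ F x, ‖v‖ ≤ M :=
  exists_forall_norm_le_of_upperHemicontinuous hF.upperHemicontinuous
    (fun x => (hF.isCompact x).isBounded) hK

section Solutions

variable {F : X m → Set (X m)} {γ γ' : ℝ → X m} {I J : Set ℝ} {M : NNReal} {a b c s t : ℝ}

theorem IsSolOn.mono (h : IsSolOn F γ J) (hIJ : I ⊆ J) : IsSolOn F γ I := by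
  obtain ⟨g, hg, hgF⟩ := h
  exact ⟨g, fun s hs t ht => hg s (hIJ hs) t (hIJ ht), ae_restrict_of_ae_restrict_of_subset hIJ hgF⟩

theorem IsSolOn.congr (h : IsSolOn F γ I) (hI : MeasurableSet I) (heq : EqOn γ γ' I) :
    IsSolOn F γ' I := by
  obtain ⟨g, hg, hgF⟩ := h
  refine ⟨g, fun s hs t ht => heq hs ▸ heq ht ▸ hg s hs t ht, ?_⟩
  filter_upwards [hgF, ae_restrict_mem hI] with u hu huI using heq huI ▸ hu

theorem IsSolOn.comp_add_right (h : IsSolOn F γ I) (c : ℝ) :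
    IsSolOn F (fun u => γ (u + c)) ((· + c) ⁻¹' I) := by
  obtain ⟨g, hg, hgF⟩ := h
  refine ⟨fun u => g (u + c), fun s hs t ht => ?_, ?_⟩
  · obtain ⟨hint, heq⟩ := hg _ hs _ ht
    exact ⟨by simpa using hint.comp_add_right c, by rwa [intervalIntegral.integral_comp_add_right]⟩
  · exact ((measurePreserving_add_right volume c).restrict_preimage_emb
      (measurableEmbedding_addRight c) I).quasiMeasurePreserving.ae hgF

theorem isSolOn_of_forall_eq_add_integral {g : ℝ → X m}
    (hg : ∀ t ∈ I, IntervalIntegrable g volume c t ∧ γ t = γ c + ∫ u in c..t, g u)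
    (hgF : ∀ᵐ u ∂volume.restrict I, g u ∈ F (γ u)) : IsSolOn F γ I := by
  refine ⟨g, fun s hs t ht => ⟨(hg s hs).1.symm.trans (hg t ht).1, ?_⟩, hgF⟩
  rw [(hg s hs).2, (hg t ht).2, add_assoc,
    intervalIntegral.integral_add_adjacent_intervals (hg s hs).1
      ((hg s hs).1.symm.trans (hg t ht).1)]

theorem IsSolOn.Icc_union_Icc (hab : a ≤ b) (hbc : b ≤ c) (h₁ : IsSolOn F γ (Icc a b))
    (h₂ : IsSolOn F γ (Icc b c)) : IsSolOn F γ (Icc a c) := by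
  obtain ⟨g₁, hg₁, hgF₁⟩ := h₁
  obtain ⟨g₂, hg₂, hgF₂⟩ := h₂
  set g := (Iic b).piecewise g₁ g₂
  have hg₁eq : EqOn g₁ g (Iic b) := (piecewise_eqOn _ _ _).symm
  have hg₂eq : EqOn g₂ g (Ioi b) := by
    simpa only [compl_Iic] using (piecewise_eqOn_compl (Iic b) g₁ g₂).symm
  have hg_of_eqOn : ∀ {g' : ℝ → X m} {t}, EqOn g' g (uIoc b t) →
      IntervalIntegrable g' volume b t ∧ γ t = γ b + ∫ u in b..t, g' u →
      IntervalIntegrable g volume b t ∧ γ t = γ b + ∫ u in b..t, g u := fun heq hg' =>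
    ⟨hg'.1.congr heq, by
      rw [hg'.2, intervalIntegral.integral_congr_ae (Eventually.of_forall heq)]⟩
  refine isSolOn_of_forall_eq_add_integral (c := b) (g := g) (fun t ht => ?_) ?_
  · rcases le_total t b with htb | hbt
    · refine hg_of_eqOn (hg₁eq.mono ?_) (hg₁ b (right_mem_Icc.2 hab) t ⟨ht.1, htb⟩)
      exact uIoc_of_ge htb ▸ Ioc_subset_Iic_self
    · refine hg_of_eqOn (hg₂eq.mono ?_) (hg₂ b (left_mem_Icc.2 hbc) t ⟨hbt, ht.2⟩)
      exact uIoc_of_le hbt ▸ Ioc_subset_Ioi_self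
  · rw [← Icc_union_Ioc_eq_Icc hab hbc, ae_restrict_union_iff]
    constructor
    · filter_upwards [hgF₁, ae_restrict_mem measurableSet_Icc] with u hu hub
      exact hg₁eq hub.2 ▸ hu
    · filter_upwards [ae_restrict_of_ae_restrict_of_subset Ioc_subset_Icc_self hgF₂,
        ae_restrict_mem measurableSet_Ioc] with u hu hub
      exact hg₂eq hub.1 ▸ hu

theorem IsSolOn.piecewise_Iic (hab : a ≤ b) (hbc : b ≤ c) (h : IsSolOn F γ (Icc a b))
    (h' : IsSolOn F γ' (Icc b c)) (heq : γ b = γ' b) :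
    IsSolOn F ((Iic b).piecewise γ γ') (Icc a c) := by
  refine (h.congr measurableSet_Icc fun u hu => ?_).Icc_union_Icc hab hbc
    (h'.congr measurableSet_Icc fun u hu => ?_)
  · exact (piecewise_eq_of_mem (Iic b) _ _ hu.2).symm
  · rcases hu.1.eq_or_lt with rfl | hbu
    · rw [piecewise_eq_of_mem (Iic b) _ _ self_mem_Iic, heq]
    · exact (piecewise_eq_of_notMem (Iic b) _ _ hbu.not_ge).symm

theorem IsSolOn.lipschitzOnWith (h : IsSolOn F γ I) (hI : I.OrdConnected)
    (hM : ∀ u ∈ I, ∀ v ∈ F (γ u), ‖v‖ ≤ M) : LipschitzOnWith M γ I := by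
  obtain ⟨g, hg, hgF⟩ := h
  refine LipschitzOnWith.of_dist_le_mul fun t ht s hs => ?_
  rw [dist_eq_norm, (hg s hs t ht).2, add_sub_cancel_left, Real.dist_eq]
  refine intervalIntegral.norm_integral_le_of_norm_le_const_ae ?_
  filter_upwards [(ae_restrict_iff' hI.measurableSet).1 hgF] with u hu hust
  have huI : u ∈ I := hI.uIcc_subset hs ht (uIoc_subset_uIcc hust)
  exact hM u huI _ (hu huI)

theorem IsSolOn.continuousOn (h : IsSolOn F γ (Icc a b)) : ContinuousOn γ (Icc a b) := by
  obtain ⟨g, hg, -⟩ := h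
  rcases le_or_gt a b with hab | hab
  · have hprim := intervalIntegral.continuousOn_primitive_interval'
      (hg a (left_mem_Icc.2 hab) b (right_mem_Icc.2 hab)).1 left_mem_uIcc
    rw [uIcc_of_le hab] at hprim
    exact (continuousOn_const.add hprim).congr fun t ht => (hg a (left_mem_Icc.2 hab) t ht).2
  · simp only [Icc_eq_empty hab.not_ge, continuousOn_empty]

/-- A solution leaving the ball needs at least the time `r / M` for it, since its speed is at most
`M` until then. -/
theorem IsSolOn.mem_closedBall {r : ℝ} (h : IsSolOn F γ I) (hI : I.OrdConnected) (hs : s ∈ I)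
    (ht : t ∈ I) (hM : ∀ x ∈ closedBall (γ s) r, ∀ v ∈ F x, ‖v‖ ≤ M) (hr : M * |t - s| < r) :
    γ t ∈ closedBall (γ s) r := by
  have hst : uIcc s t ⊆ I := hI.uIcc_subset hs ht
  have hcont : ContinuousOn (fun u => dist (γ u) (γ s)) (uIcc s t) :=
    (continuous_id.dist continuous_const).comp_continuousOn (h.mono hst).continuousOn
  by_contra hexit
  obtain ⟨u, hu, hur, hle⟩ := exists_eq_and_forall_uIcc_le hcont
    (by simpa using (by positivity : 0 ≤ M * |t - s|).trans hr.le) (not_le.1 hexit).le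
  have hlip : LipschitzOnWith M γ (uIcc s u) :=
    (h.mono ((uIcc_subset_uIcc_left hu).trans hst)).lipschitzOnWith ordConnected_uIcc
      fun w hw => hM _ (hle w hw)
  have hlt : dist (γ u) (γ s) < r := calc
    dist (γ u) (γ s) ≤ M * dist u s := hlip.dist_le_mul u right_mem_uIcc s left_mem_uIcc
    _ ≤ M * |t - s| := by gcongr; exact abs_sub_left_of_mem_uIcc hu
    _ < r := hr
  exact hlt.ne hur

theorem IsSolOn.slope_mem (h : IsSolOn F γ (Icc a b)) (hab : a < b) {C : Set (X m)}
    (hconv : Convex ℝ C) (hclosed : IsClosed C) (hC : ∀ u ∈ Icc a b, F (γ u) ⊆ C) :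
    slope γ a b ∈ C := by
  obtain ⟨g, hg, hgF⟩ := h
  obtain ⟨hint, heq⟩ := hg a (left_mem_Icc.2 hab.le) b (right_mem_Icc.2 hab.le)
  refine slope_mem_of_forall_ae_mem hab hconv hclosed hint heq ?_
  filter_upwards [hgF, ae_restrict_mem measurableSet_Icc] with u hu hub using hC u hub hu

theorem isSolOn_of_lipschitzOnWith (hγ : LipschitzOnWith M γ (Icc a b))
    (hF : ∀ u ∈ Ioo a b, ∀ v, HasDerivAt γ v u → v ∈ F (γ u)) : IsSolOn F γ (Icc a b) := by
  obtain ⟨f, hf, hγf⟩ := hγ.extend_finite_dimension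
  have hsol : IsSolOn F f (Icc a b) := by
    refine ⟨deriv f, fun s _ t _ => ⟨intervalIntegrable_deriv_of_lipschitzWith_s5 hf s t, ?_⟩, ?_⟩
    · rw [integral_deriv_eq_sub_of_lipschitzWith_s5 hf, add_sub_cancel]
    · rw [← restrict_Ioo_eq_restrict_Icc]
      filter_upwards [ae_restrict_of_ae hf.ae_differentiableAt_real,
        ae_restrict_mem measurableSet_Ioo] with u hu hab
      have hderiv : HasDerivAt γ (deriv f u) u :=
        hu.hasDerivAt.congr_of_eventuallyEq (hγf.eventuallyEq_of_mem (Icc_mem_nhds hab.1 hab.2))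
      exact hγf (Ioo_subset_Icc_self hab) ▸ hF u hab _ hderiv
  exact hsol.congr measurableSet_Icc hγf.symm

end Solutions

section Limits

variable {F : X m → Set (X m)} {ι : Type*} {γ : ι → ℝ → X m} {σ : ℝ → X m} {M : NNReal} {a b : ℝ}

theorem IsCusco.mem_of_hasDerivWithinAt_of_tendsto (hF : IsCusco F) {l : Filter ι} [l.NeBot]
    (hab : a < b) (hlip : ∀ᶠ i in l, LipschitzOnWith M (γ i) (Icc a b))
    (hsol : ∀ᶠ i in l, IsSolOn F (γ i) (Icc a b))
    (hlim : ∀ u ∈ Icc a b, Tendsto (fun i => γ i u) l (𝓝 (σ u))) {v : X m}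
    (hv : HasDerivWithinAt σ v (Ioi a) a) : v ∈ F (σ a) := by
  have ha : a ∈ Icc a b := left_mem_Icc.2 hab.le
  rw [← (hF.isCompact _).isClosed.closure_eq, closure_eq_iInter_cthickening]
  refine mem_iInter₂.2 fun ε hε => ?_
  obtain ⟨δ, hδ, hδF⟩ : ∃ δ > 0, ∀ y ∈ ball (σ a) δ, F y ⊆ cthickening ε (F (σ a)) :=
    eventually_nhds_iff_ball.1 <| (hF.upperHemicontinuous.forall_isOpen _ _ isOpen_thickening
      (self_subset_thickening hε _)).mono fun _ hy => hy.trans (thickening_subset_cthickening _ _)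
  have hshort : ∀ᶠ t in 𝓝[>] a, M * (t - a) < δ / 2 := by
    have hcont : ContinuousAt (fun t => M * (t - a)) a := by fun_prop
    exact (hcont.eventually_lt_const (by simpa using half_pos hδ)).filter_mono nhdsWithin_le_nhds
  refine isClosed_cthickening.mem_of_tendsto
    ((hasDerivWithinAt_iff_tendsto_slope' self_notMem_Ioi).1 hv) ?_
  filter_upwards [Ioo_mem_nhdsGT hab, hshort] with t ht hMt
  have hslope : Tendsto (fun i => slope (γ i) a t) l (𝓝 (slope σ a t)) := by
    simp only [slope_def_module]
    exact ((hlim t (Ioo_subset_Icc_self ht)).sub (hlim a ha)).const_smul _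
  refine isClosed_cthickening.mem_of_tendsto hslope ?_
  filter_upwards [hlip, hsol, (hlim a ha).eventually (ball_mem_nhds _ (half_pos hδ))]
    with i hlipi hsoli hi
  have hsub : Icc a t ⊆ Icc a b := Icc_subset_Icc_right ht.2.le
  refine (hsoli.mono hsub).slope_mem ht.1 ((hF.convex _).cthickening ε) isClosed_cthickening
    fun u hu => hδF _ ?_
  calc dist (γ i u) (σ a) ≤ dist (γ i u) (γ i a) + dist (γ i a) (σ a) := dist_triangle _ _ _
    _ ≤ M * (u - a) + dist (γ i a) (σ a) := by
      gcongr
      exact (hlipi.dist_le_mul u (hsub hu) a ha).trans_eq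
        (by rw [Real.dist_eq, abs_of_nonneg (sub_nonneg.2 hu.1)])
    _ ≤ M * (t - a) + dist (γ i a) (σ a) := by gcongr; exact hu.2
    _ < δ / 2 + δ / 2 := add_lt_add hMt hi
    _ = δ := add_halves δ

theorem IsCusco.isSolOn_of_tendsto (hF : IsCusco F) {l : Filter ι} [l.NeBot]
    (hlip : ∀ᶠ i in l, LipschitzOnWith M (γ i) (Icc a b))
    (hsol : ∀ r < b, ∀ᶠ i in l, IsSolOn F (γ i) (Icc a r))
    (hlim : ∀ u ∈ Icc a b, Tendsto (fun i => γ i u) l (𝓝 (σ u))) : IsSolOn F σ (Icc a b) := by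
  refine isSolOn_of_lipschitzOnWith (lipschitzOnWith_of_tendsto hlip hlim) fun u hu v hv => ?_
  obtain ⟨r, hur, hrb⟩ := exists_between hu.2
  have hsub : Icc u r ⊆ Icc a b := Icc_subset_Icc hu.1.le hrb.le
  exact hF.mem_of_hasDerivWithinAt_of_tendsto hur (hlip.mono fun _ h => h.mono hsub)
    ((hsol r hrb).mono fun _ h => h.mono (Icc_subset_Icc_left hu.1.le))
    (fun w hw => hlim w (hsub hw)) hv.hasDerivWithinAt

theorem IsCusco.exists_isSolOn_tendsto (hF : IsCusco F) (l : Ultrafilter ι) {K : Set (X m)}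
    (hK : IsCompact K) {T : ι → ℝ} (haT : ∀ᶠ i in l, a ≤ T i) (hT : Tendsto T l (𝓝 b))
    (hsol : ∀ᶠ i in l, IsSolOn F (γ i) (Icc a (T i)))
    (hγK : ∀ᶠ i in l, MapsTo (γ i) (Icc a (T i)) K) :
    ∃ σ, IsSolOn F σ (Icc a b) ∧ ∀ (u : ι → ℝ) (v : ℝ), (∀ᶠ i in l, u i ∈ Icc a (T i)) →
      Tendsto u l (𝓝 v) → Tendsto (fun i => γ i (u i)) l (𝓝 (σ v)) := by
  obtain ⟨M, hM⟩ := hF.exists_forall_norm_le hK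
  -- Freezing each solution outside `[a, T i]` makes them comparable on a common domain.
  let clamp (i : ι) (u : ℝ) : ℝ := max a (min u (T i))
  have hclamp_mem : ∀ᶠ i in l, ∀ u, clamp i u ∈ Icc a (T i) := haT.mono fun i hi u =>
    ⟨le_max_left _ _, max_le hi (min_le_right _ _)⟩
  have hclamp_eq : ∀ i, ∀ u ∈ Icc a (T i), clamp i u = u := fun i u hu => by
    simp only [clamp, min_eq_left hu.2, max_eq_right hu.1]
  have hlip : ∀ᶠ i in l, LipschitzWith M (γ i ∘ clamp i) := by
    filter_upwards [hsol, hγK, hclamp_mem] with i hi hiK hmem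
    have hγi := hi.lipschitzOnWith ordConnected_Icc fun u hu => hM _ (hiK hu)
    have hclamp : LipschitzWith 1 (clamp i) := (LipschitzWith.id.min_const (T i)).const_max a
    simpa only [mul_one, lipschitzOnWith_univ] using
      hγi.comp (hclamp.lipschitzOnWith (s := univ)) fun u _ => hmem u
  obtain ⟨σ, hσ⟩ := exists_forall_tendsto_of_lipschitzWith hK l hlip
    (by filter_upwards [hγK, hclamp_mem] with i hiK hmem u using hiK (hmem u))
  refine ⟨σ, hF.isSolOn_of_tendsto (hlip.mono fun _ h => h.lipschitzOnWith) (fun r hr => ?_)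
    fun u _ => hσ _ u tendsto_const_nhds, fun u v hu huv => (hσ u v huv).congr' ?_⟩
  · filter_upwards [hsol, hT.eventually_const_lt hr] with i hi hri
    have hsub : Icc a r ⊆ Icc a (T i) := Icc_subset_Icc_right hri.le
    exact (hi.mono hsub).congr measurableSet_Icc fun u hu =>
      congrArg (γ i) (hclamp_eq i u (hsub hu)).symm
  · exact hu.mono fun i hui => congrArg (γ i) (hclamp_eq i _ hui)

end Limits

section ReachableSets

variable {F : X m → Set (X m)} {B C : Set (X m)} {s t : ℝ} {x y : X m}

theorem mem_reachSet_iff_exists_isSolOn :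
    y ∈ reachSet F t B ↔ ∃ γ, IsSolOn F γ (Icc 0 t) ∧ γ 0 ∈ B ∧ γ t = y := by
  simp only [reachSet, reach, mem_iUnion, mem_ofPred_eq, exists_prop]
  exact ⟨fun ⟨_, hx, γ, hγ, h0, ht⟩ => ⟨γ, hγ, h0 ▸ hx, ht⟩,
    fun ⟨γ, hγ, h0, ht⟩ => ⟨γ 0, h0, γ, hγ, rfl, ht⟩⟩

theorem reachSet_mono (hBC : B ⊆ C) : reachSet F t B ⊆ reachSet F t C :=
  biUnion_subset_biUnion_left hBC

theorem subset_reachSet_zero : B ⊆ reachSet F 0 B := fun x hx =>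
  mem_reachSet_iff_exists_isSolOn.2 ⟨fun _ => x, ⟨0, by simp, by simp⟩, hx, rfl⟩

theorem reachSet_reachSet_subset (hs : 0 ≤ s) (ht : 0 ≤ t) :
    reachSet F t (reachSet F s B) ⊆ reachSet F (s + t) B := fun y hy => by
  obtain ⟨γ₂, hγ₂, h0, rfl⟩ := mem_reachSet_iff_exists_isSolOn.1 hy
  obtain ⟨γ₁, hγ₁, hB, heq⟩ := mem_reachSet_iff_exists_isSolOn.1 h0
  have hshift : IsSolOn F (fun u => γ₂ (u + -s)) (Icc s (s + t)) := by
    simpa [add_comm t s] using hγ₂.comp_add_right (-s)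
  refine mem_reachSet_iff_exists_isSolOn.2
    ⟨_, hγ₁.piecewise_Iic hs (le_add_of_nonneg_right ht) hshift (by simpa using heq), ?_, ?_⟩
  · rwa [piecewise_eq_of_mem (Iic s) _ _ hs]
  · rcases ht.eq_or_lt with rfl | ht
    · simpa using heq
    · simp [ht]

theorem subset_reachSet_nat_mul (hs : 0 ≤ s) (hC : C ⊆ reachSet F s C) (n : ℕ) :
    C ⊆ reachSet F (n * s) C := by
  induction n with
  | zero => simpa using subset_reachSet_zero
  | succ n ih => calc
      C ⊆ reachSet F s (reachSet F (n * s) C) := hC.trans (reachSet_mono ih)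
      _ ⊆ reachSet F (n * s + s) C := reachSet_reachSet_subset (by positivity) hs
      _ = reachSet F ((n + 1 : ℕ) * s) C := by rw [Nat.cast_succ, add_one_mul]

theorem IsCusco.mem_reach_of_tendsto (hF : IsCusco F) {ι : Type*} {l : Filter ι} [l.NeBot]
    {γ : ι → ℝ → X m} {T : ι → ℝ} {K : Set (X m)} (hK : IsCompact K) (hT₀ : ∀ᶠ i in l, 0 ≤ T i)
    (hT : Tendsto T l (𝓝 t)) (hsol : ∀ᶠ i in l, IsSolOn F (γ i) (Icc 0 (T i)))
    (hγK : ∀ᶠ i in l, MapsTo (γ i) (Icc 0 (T i)) K) (hx : Tendsto (fun i => γ i 0) l (𝓝 x))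
    (hy : Tendsto (fun i => γ i (T i)) l (𝓝 y)) : y ∈ reach F t x := by
  have hle := Ultrafilter.of_le l
  obtain ⟨σ, hσ, hlim⟩ := hF.exists_isSolOn_tendsto (Ultrafilter.of l) hK (hT₀.filter_mono hle)
    (hT.mono_left hle) (hsol.filter_mono hle) (hγK.filter_mono hle)
  have hσ₀ := hlim (fun _ => 0) 0 ((hT₀.filter_mono hle).mono fun _ => left_mem_Icc.2)
    tendsto_const_nhds
  have hσt := hlim T t ((hT₀.filter_mono hle).mono fun _ => right_mem_Icc.2) (hT.mono_left hle)
  exact ⟨σ, hσ, tendsto_nhds_unique hσ₀ (hx.mono_left hle),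
    tendsto_nhds_unique hσt (hy.mono_left hle)⟩

end ReachableSets

section OmegaLimits

variable {F : X m → Set (X m)} {B C : Set (X m)} {s t : ℝ} {y : X m}

theorem mem_omegaLim_of_tendsto {ι : Type*} {l : Filter ι} [l.NeBot] {T : ι → ℝ} {p : ι → X m}
    (hT : Tendsto T l atTop) (hp : Tendsto p l (𝓝 y)) (h : ∀ᶠ i in l, p i ∈ reachSet F (T i) B) :
    y ∈ omegaLim F B := by
  have hfreq : ∃ᶠ q in atTop ×ˢ 𝓝 y, q.2 ∈ reachSet F q.1 B :=
    (hT.prodMk hp).frequently h.frequently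
  obtain ⟨q, hq, hqB⟩ := exists_seq_forall_of_frequently hfreq
  exact ⟨Prod.fst ∘ q, Prod.snd ∘ q, tendsto_fst.comp hq, hqB, tendsto_snd.comp hq⟩

theorem mem_omegaLim_of_eventually_mem_reachSet (h : ∀ᶠ t in atTop, y ∈ reachSet F t B) :
    y ∈ omegaLim F B :=
  mem_omegaLim_of_tendsto (T := fun t => t) (p := fun _ => y) tendsto_id tendsto_const_nhds h

theorem omegaLim_mono (hBC : B ⊆ C) : omegaLim F B ⊆ omegaLim F C :=
  fun _ ⟨T, p, hT, hp, hy⟩ => ⟨T, p, hT, fun n => reachSet_mono hBC (hp n), hy⟩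

theorem exists_isSolOn_of_mem_omegaLim (hy : y ∈ omegaLim F B) :
    ∃ (T : ℕ → ℝ) (γ : ℕ → ℝ → X m), Tendsto T atTop atTop ∧
      (∀ n, IsSolOn F (γ n) (Icc 0 (T n))) ∧ (∀ n, γ n 0 ∈ B) ∧
      Tendsto (fun n => γ n (T n)) atTop (𝓝 y) := by
  obtain ⟨T, p, hT, hp, hy⟩ := hy
  choose γ hγ h0 heq using fun n => mem_reachSet_iff_exists_isSolOn.1 (hp n)
  exact ⟨T, γ, hT, hγ, h0, by simpa only [heq] using hy⟩

section LongSolutions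

variable {ι : Type*} {l : Filter ι} [l.NeBot] {γ : ι → ℝ → X m} {T : ι → ℝ} {K : Set (X m)}

theorem IsCusco.mem_reachSet_inter_omegaLim (hF : IsCusco F) (hK : IsCompact K) (hs : 0 ≤ s)
    (hT : Tendsto T l atTop) (hsol : ∀ᶠ i in l, IsSolOn F (γ i) (Icc 0 (T i)))
    (h0 : ∀ᶠ i in l, γ i 0 ∈ B) (hγK : ∀ᶠ i in l, MapsTo (γ i) (Icc (T i - s) (T i)) K)
    (hy : Tendsto (fun i => γ i (T i)) l (𝓝 y)) : y ∈ reachSet F s (K ∩ omegaLim F B) := by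
  have hle := Ultrafilter.of_le l
  have hTs : ∀ᶠ i in l, 0 ≤ T i - s := (hT.eventually_ge_atTop s).mono fun _ => sub_nonneg.2
  obtain ⟨x, hxK, hx⟩ := exists_tendsto_of_eventually_mem_isCompact hK (Ultrafilter.of l)
    (f := fun i => γ i (T i - s))
    ((hγK.mono fun i hi => hi (left_mem_Icc.2 (sub_le_self _ hs))).filter_mono hle)
  have hxω : x ∈ omegaLim F B := by
    refine mem_omegaLim_of_tendsto
      ((tendsto_atTop_add_const_right l (-s) hT).mono_left hle) hx (Eventually.filter_mono hle ?_)
    filter_upwards [hsol, h0] with i hi hi0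
    exact mem_reachSet_iff_exists_isSolOn.2
      ⟨γ i, hi.mono (Icc_subset_Icc_right (sub_le_self _ hs)), hi0, rfl⟩
  have hxy : y ∈ reach F s x := by
    refine hF.mem_reach_of_tendsto (l := (Ultrafilter.of l : Filter ι)) (T := fun _ => s)
      (γ := fun i u => γ i (u + (T i - s))) hK (Eventually.of_forall fun _ => hs)
      tendsto_const_nhds (Eventually.filter_mono hle ?_) (Eventually.filter_mono hle ?_)
      (by simpa using hx) (by simpa using hy.mono_left hle)
    · filter_upwards [hsol, hTs] with i hi hTi
      have hsub : Icc (T i - s) (T i) ⊆ Icc 0 (T i) := Icc_subset_Icc_left hTi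
      simpa using (hi.mono hsub).comp_add_right (T i - s)
    · filter_upwards [hγK] with i hi u hu
      exact hi ⟨by linarith [hu.1], by linarith [hu.2]⟩
  exact mem_biUnion ⟨hxK, hxω⟩ hxy

theorem IsCusco.mem_omegaLim_inter_omegaLim (hF : IsCusco F) (hK : IsCompact K)
    (hT : Tendsto T l atTop) (hsol : ∀ᶠ i in l, IsSolOn F (γ i) (Icc 0 (T i)))
    (h0 : ∀ᶠ i in l, γ i 0 ∈ B) (hγK : ∀ᶠ i in l, MapsTo (γ i) (Icc 0 (T i)) K)
    (hy : Tendsto (fun i => γ i (T i)) l (𝓝 y)) : y ∈ omegaLim F (K ∩ omegaLim F B) := by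
  refine mem_omegaLim_of_eventually_mem_reachSet ?_
  filter_upwards [eventually_ge_atTop 0] with s hs
  refine hF.mem_reachSet_inter_omegaLim hK hs hT hsol h0 ?_ hy
  filter_upwards [hγK, hT.eventually_ge_atTop s] with i hi hTi
  exact hi.mono_left (Icc_subset_Icc_left (sub_nonneg.2 hTi))

end LongSolutions

theorem IsCusco.exists_pos_forall_omegaLim_subset_reachSet (hF : IsCusco F)
    (hω : IsCompact (omegaLim F B)) :
    ∃ τ > 0, ∀ s ∈ Icc 0 τ, omegaLim F B ⊆ reachSet F s (omegaLim F B) := by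
  set K := cthickening 2 (omegaLim F B)
  obtain ⟨M, hM⟩ := hF.exists_forall_norm_le (hω.cthickening : IsCompact K)
  obtain ⟨τ, hτ, hMτ⟩ := exists_pos_mul_lt one_pos (M : ℝ)
  refine ⟨τ, hτ, fun s hs y hy => reachSet_mono (B := K ∩ omegaLim F B) inter_subset_right ?_⟩
  obtain ⟨T, γ, hT, hsol, h0, hlim⟩ := exists_isSolOn_of_mem_omegaLim hy
  refine hF.mem_reachSet_inter_omegaLim hω.cthickening hs.1 hT (Eventually.of_forall hsol)
    (Eventually.of_forall h0) ?_ hlim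
  filter_upwards [hT.eventually_ge_atTop s, hlim.eventually (closedBall_mem_nhds y one_pos)]
    with n hTn hn u hu
  have hball : closedBall (γ n (T n)) 1 ⊆ K :=
    (closedBall_subset_closedBall' (by linarith [mem_closedBall.1 hn])).trans
      (closedBall_subset_cthickening hy 2)
  refine hball ((hsol n).mem_closedBall ordConnected_Icc (right_mem_Icc.2 (hs.1.trans hTn))
    ⟨(sub_nonneg.2 hTn).trans hu.1, hu.2⟩ (fun x hx => hM x (hball hx)) ?_)
  calc M * |u - T n| ≤ M * τ := by
        gcongr
        rw [abs_of_nonpos (sub_nonpos.2 hu.2)]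
        linarith [hu.1, hs.2]
    _ < 1 := hMτ

theorem IsCusco.omegaLim_subset_reachSet (hF : IsCusco F) (hω : IsCompact (omegaLim F B))
    (ht : 0 ≤ t) : omegaLim F B ⊆ reachSet F t (omegaLim F B) := by
  obtain ⟨τ, hτ, hsub⟩ := hF.exists_pos_forall_omegaLim_subset_reachSet hω
  obtain ⟨n, hn⟩ := exists_nat_gt (t / τ)
  have hn₀ : (0 : ℝ) < n := (div_nonneg ht hτ.le).trans_lt hn
  have htn : t / n ∈ Icc 0 τ := ⟨by positivity, (div_le_comm₀ hτ hn₀).1 hn.le⟩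
  simpa only [mul_div_cancel₀ t hn₀.ne'] using subset_reachSet_nat_mul htn.1 (hsub _ htn) n

theorem IsCusco.invariant_omegaLim (hF : IsCusco F) (hω : IsCompact (omegaLim F B))
    (hB : omegaLim F B ⊆ B) : Invariant F (omegaLim F B) := by
  refine fun t ht => Subset.antisymm (fun y hy => ?_) (hF.omegaLim_subset_reachSet hω ht)
  refine mem_omegaLim_of_eventually_mem_reachSet ?_
  filter_upwards [eventually_ge_atTop t] with r hr
  have hωB : omegaLim F B ⊆ reachSet F (r - t) B :=
    (hF.omegaLim_subset_reachSet hω (sub_nonneg.2 hr)).trans (reachSet_mono hB)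
  simpa only [sub_add_cancel] using
    reachSet_reachSet_subset (sub_nonneg.2 hr) ht (reachSet_mono hωB hy)

end OmegaLimits

section Stability

variable {F : X m → Set (X m)} {A U : Set (X m)}

theorem IsCusco.mem_of_tendsto_of_posInvariant (hF : IsCusco F) {ι : Type*} (l : Ultrafilter ι)
    {γ : ι → ℝ → X m} {T : ι → ℝ} {K : Set (X m)} {x y : X m} (hK : IsCompact K)
    (hA : PosInvariant F A) (hω : omegaLim F (K ∩ omegaLim F U) ⊆ A) (hU : U ∈ 𝓝 x) (hxA : x ∈ A)
    (hT : ∀ᶠ i in l, 0 ≤ T i) (hsol : ∀ᶠ i in l, IsSolOn F (γ i) (Icc 0 (T i)))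
    (hγK : ∀ᶠ i in l, MapsTo (γ i) (Icc 0 (T i)) K) (hx : Tendsto (fun i => γ i 0) l (𝓝 x))
    (hy : Tendsto (fun i => γ i (T i)) l (𝓝 y)) : y ∈ A := by
  rcases tendsto_atTop_or_exists_tendsto_nhds l hT with htop | ⟨t, ht⟩
  · exact hω (hF.mem_omegaLim_inter_omegaLim hK htop hsol (hx.eventually_mem hU) hγK hy)
  · exact hA t (ge_of_tendsto ht hT)
      (mem_biUnion hxA (hF.mem_reach_of_tendsto hK hT ht hsol hγK hx hy))

theorem IsCusco.eventually_mapsTo_cthickening (hF : IsCusco F) {ε : ℝ} (hε : 0 < ε)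
    (hcompact : IsCompact A) (hinv : PosInvariant F A) (hU : A ⊆ interior U)
    (hω : omegaLim F (cthickening ε A ∩ omegaLim F U) ⊆ A) :
    ∀ᶠ δ in 𝓝[>] 0, ∀ (γ : ℝ → X m) (T : ℝ), IsSolOn F γ (Icc 0 T) → γ 0 ∈ thickening δ A →
      MapsTo γ (Icc 0 T) (cthickening ε A) := by
  by_contra hunstable
  obtain ⟨δ, hδ, hescape⟩ := exists_seq_forall_of_frequently
    ((not_eventually.1 hunstable).and_eventually (Ioo_mem_nhdsGT hε))
  have hexit : ∀ n, ∃ (γ : ℝ → X m) (T : ℝ), 0 ≤ T ∧ IsSolOn F γ (Icc 0 T) ∧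
      γ 0 ∈ thickening (δ n) A ∧ MapsTo γ (Icc 0 T) (cthickening ε A) ∧
      infEDist (γ T) A = ENNReal.ofReal ε := fun n => by
    obtain ⟨hn, hδε⟩ := hescape n
    push Not at hn
    obtain ⟨γ, T, hsol, h0, hmaps⟩ := hn
    obtain ⟨u, hu, heq, hsub⟩ := exists_infEDist_eq_and_mapsTo_cthickening hsol.continuousOn
      (thickening_subset_cthickening_of_le hδε.2.le A h0) hmaps
    exact ⟨γ, u, hu.1, hsol.mono (Icc_subset_Icc_right hu.2), h0, hsub, heq⟩
  choose γ T hT hsol h0 hmaps hdist using hexit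
  have hlim : ∀ u : ℕ → ℝ, (∀ n, u n ∈ Icc 0 (T n)) →
      ∃ x, Tendsto (fun n => γ n (u n)) (hyperfilter ℕ) (𝓝 x) := fun u hu =>
    (exists_tendsto_of_eventually_mem_isCompact hcompact.cthickening (hyperfilter ℕ)
      (Eventually.of_forall fun n => hmaps n (hu n))).imp fun _ => And.right
  obtain ⟨x, hx⟩ := hlim (fun _ => 0) fun n => left_mem_Icc.2 (hT n)
  obtain ⟨y, hy⟩ := hlim T fun n => right_mem_Icc.2 (hT n)
  have hxA : x ∈ A := by
    rw [← hcompact.isClosed.closure_eq]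
    exact mem_closure_of_tendsto_of_mem_thickening
      ((hδ.mono_right nhdsWithin_le_nhds).mono_left Nat.hyperfilter_le_atTop) hx
      (Eventually.of_forall h0)
  have hyA : y ∈ A := hF.mem_of_tendsto_of_posInvariant (hyperfilter ℕ) hcompact.cthickening hinv hω
    (mem_interior_iff_mem_nhds.1 (hU hxA)) hxA (Eventually.of_forall hT)
    (Eventually.of_forall hsol) (Eventually.of_forall hmaps) hx hy
  have hyε : infEDist y A = ENNReal.ofReal ε :=
    tendsto_nhds_unique (((continuous_infEDist (s := A)).tendsto y).comp hy)
      (tendsto_const_nhds.congr fun n => (hdist n).symm)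
  rw [infEDist_zero_of_mem hyA] at hyε
  exact (ENNReal.ofReal_pos.2 hε).ne hyε

end Stability

theorem attractorIn_is_attractor_general {F : X m → Set (X m)} (hF : IsCusco F)
    {A U : Set (X m)} (hU : A ⊆ interior U) (hA : IsAttractorIn F (omegaLim F U) A) :
    IsAttractor F A := by
  obtain ⟨hcompact, hAω, V, hV, hω⟩ := hA
  have hinv : Invariant F A := by
    simpa only [hω] using hF.invariant_omegaLim (B := V ∩ omegaLim F U) (hω ▸ hcompact)
      (hω.trans_subset (subset_inter (hV.trans interior_subset) hAω))
  obtain ⟨ε, hε, hεV⟩ := hcompact.exists_cthickening_subset_open isOpen_interior hV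
  have hωε : omegaLim F (cthickening ε A ∩ omegaLim F U) ⊆ A :=
    (omegaLim_mono (inter_subset_inter_left _ (hεV.trans interior_subset))).trans_eq hω
  obtain ⟨δ₀, hδ₀, hδ₀U⟩ := hcompact.exists_thickening_subset_open isOpen_interior hU
  obtain ⟨δ, hstable, hδ⟩ := ((hF.eventually_mapsTo_cthickening hε hcompact
    (fun t ht => (hinv t ht).subset) hU hωε).and (Ioo_mem_nhdsGT hδ₀)).exists
  have hAδ : A ⊆ thickening δ A := self_subset_thickening hδ.1 A
  refine ⟨hcompact, thickening δ A, hAδ.trans_eq isOpen_thickening.interior_eq.symm,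
    Subset.antisymm (fun y hy => hωε ?_) fun y hy => ?_⟩
  · obtain ⟨T, γ, hT, hsol, h0, hlim⟩ := exists_isSolOn_of_mem_omegaLim hy
    have hδU : thickening δ A ⊆ U :=
      (thickening_mono hδ.2.le A).trans (hδ₀U.trans interior_subset)
    exact hF.mem_omegaLim_inter_omegaLim hcompact.cthickening hT (Eventually.of_forall hsol)
      (Eventually.of_forall fun n => hδU (h0 n))
      (Eventually.of_forall fun n => hstable _ _ (hsol n) (h0 n)) hlim
  · refine mem_omegaLim_of_eventually_mem_reachSet ?_
    filter_upwards [eventually_ge_atTop 0] with t ht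
    exact reachSet_mono hAδ ((hinv t ht).symm.subset hy)

/-- Theorem 2.6: an attractor in the attractor `𝒜` is an attractor
of the differential inclusion in the whole space `X`. -/
theorem attractorIn_is_attractor {m : ℕ} (F : X m → Set (X m)) (hF : Standing F)
    (𝒜 : Set (X m)) (h𝒜 : IsAttractor F 𝒜)
    (A : Set (X m)) (hA : IsAttractorIn F 𝒜 A) :
    IsAttractor F A := by
  obtain ⟨-, U, hU, rfl⟩ := h𝒜
  exact attractorIn_is_attractor_general hF.isCusco (hA.2.1.trans hU) hA

end DI
end

section
/- Let O ⊆ ℝ^m be open, 𝒜 ⊆ O closed in O, and let V ∈ C(O) be such that V is C^∞ on O ∖ 𝒜, V = 0 on 𝒜, and V > 0 on O ∖ 𝒜. Then there exists a nonnegative function β ∈ C^∞([0,∞)) with β^{(k)}(0) = 0 for all k = 0,1,2,…, lim_{t→∞} β(t) = +∞, and β'(t) > 0 for all t > 0, such that W(x) = β(V(x)) is a C^∞ function on O. -/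
open Set Filter Topology MeasureTheory Metric Pointwise

namespace DI

variable {m : ℕ}

/-!
Translates `t ↦ ρ (t - 1 / (n + 1))` of a smooth function `ρ` flat at `0` do not see `V` near the
zero set of `V`, so each composition `x ↦ ρ (V x - 1 / (n + 1))` is smooth on `O`. The function `β`
is a series of these translates. Since `O` is covered by countably many balls carrying bump
functions, a diagonal choice of the coefficients makes every sufficiently small weighting of
countably many smooth functions sum to a smooth function on `O`. Applying this on `O` and on `ℝ`,
and taking the smaller coefficients, makes both `β ∘ V` and `β` smooth.
-/

section SmallCoefficients

open scoped ContDiff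

theorem exists_pos_forall_eventually_mul_le {ι : Type*} [Countable ι] (B : ι → ℕ → ℝ)
    {u : ℕ → ℝ} (hu : ∀ n, 0 < u n) :
    ∃ c : ℕ → ℝ, (∀ n, 0 < c n) ∧ ∀ i, ∀ᶠ n in atTop, c n * B i n ≤ u n := by
  cases isEmpty_or_nonempty ι with
  | inl _ => exact ⟨u, hu, isEmptyElim⟩
  | inr _ =>
    obtain ⟨e, he⟩ := exists_surjective_nat ι
    let S : ℕ → ℝ := fun n => ∑ k ∈ Finset.range (n + 1), |B (e k) n|
    have hS : ∀ n, 0 < 1 + S n := fun n => by positivity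
    refine ⟨fun n => u n / (1 + S n), fun n => div_pos (hu n) (hS n), fun i => ?_⟩
    obtain ⟨k, rfl⟩ := he i
    filter_upwards [eventually_ge_atTop k] with n hkn
    have hBS : B (e k) n ≤ 1 + S n := calc
      B (e k) n ≤ |B (e k) n| := le_abs_self _
      _ ≤ S n := Finset.single_le_sum (f := fun k => |B (e k) n|) (fun _ _ => abs_nonneg _)
          (Finset.mem_range.2 (Nat.lt_succ_of_le hkn))
      _ ≤ 1 + S n := le_add_of_nonneg_left zero_le_one
    calc u n / (1 + S n) * B (e k) n ≤ u n / (1 + S n) * (1 + S n) :=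
          mul_le_mul_of_nonneg_left hBS (div_pos (hu n) (hS n)).le
      _ = u n := div_mul_cancel₀ _ (hS n).ne'

theorem exists_countable_contDiffBump_cover {E : Type*} [PseudoMetricSpace E]
    [SecondCountableTopology E] {O : Set E} (hO : IsOpen O) :
    ∃ (t : Set E) (b : ∀ z : E, ContDiffBump z), t.Countable ∧
      (∀ z ∈ t, closedBall z (b z).rOut ⊆ O) ∧ O ⊆ ⋃ z ∈ t, ball z (b z).rIn := by
  have hbump : ∀ z ∈ O, ∃ b : ContDiffBump z, closedBall z b.rOut ⊆ O := by
    intro z hz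
    obtain ⟨r, hr, hrO⟩ := Metric.nhds_basis_closedBall.mem_iff.1 (hO.mem_nhds hz)
    exact ⟨⟨r / 2, r, half_pos hr, half_lt_self hr⟩, hrO⟩
  choose! b hb using hbump
  obtain ⟨t, htO, ht, hcover⟩ := TopologicalSpace.countable_cover_nhdsWithin
    fun z (_ : z ∈ O) => mem_nhdsWithin_of_mem_nhds (ball_mem_nhds z (b z).rIn_pos)
  exact ⟨t, b, ht, fun z hz => hb z (htO hz), hcover⟩

variable {E F : Type*} [NormedAddCommGroup E] [NormedSpace ℝ E]
  [NormedAddCommGroup F] [NormedSpace ℝ F] {N : ℕ∞}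

theorem exists_pos_forall_contDiff_tsum_smul [CompleteSpace F] {ι : Type*} [Countable ι]
    {g : ι → ℕ → E → F} (hg : ∀ i n, ContDiff ℝ N (g i n))
    (hbound : ∀ i n, ∀ k : ℕ, k ≤ N → ∃ C, ∀ x, ‖iteratedFDeriv ℝ k (g i n) x‖ ≤ C) :
    ∃ c : ℕ → ℝ, (∀ n, 0 < c n) ∧ ∀ d : ℕ → ℝ, (∀ n, |d n| ≤ c n) → ∀ i,
      (∀ x, Summable fun n => d n • g i n x) ∧ ContDiff ℝ N fun x => ∑' n, d n • g i n x := by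
  choose C hC using hbound
  obtain ⟨c, hc_pos, hc⟩ := exists_pos_forall_eventually_mul_le
    (fun (p : ι × {k : ℕ // k ≤ N}) n => C p.1 n p.2 p.2.2) (u := fun n => (1 / 2 : ℝ) ^ n)
    fun n => by positivity
  refine ⟨c, hc_pos, fun d hd i => ?_⟩
  have hderiv : ∀ k : ℕ, k ≤ N → ∀ᶠ n in atTop, ∀ x,
      ‖iteratedFDeriv ℝ k (fun y => d n • g i n y) x‖ ≤ (1 / 2 : ℝ) ^ n := by
    intro k hk
    filter_upwards [hc (i, ⟨k, hk⟩)] with n hn x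
    have hgk : ContDiffAt ℝ k (g i n) x := ((hg i n).of_le (by exact_mod_cast hk)).contDiffAt
    rw [iteratedFDeriv_const_smul_apply' hgk, norm_smul, Real.norm_eq_abs]
    exact (mul_le_mul (hd n) (hC i n k hk x) (norm_nonneg _) (hc_pos n).le).trans hn
  refine ⟨fun x => ?_, contDiff_tsum_of_eventually (v := fun _ n => (1 / 2 : ℝ) ^ n)
    (fun n => (hg i n).const_smul (d n)) (fun _ _ => summable_geometric_two) ?_⟩
  · refine Summable.of_norm_bounded_eventually_nat summable_geometric_two ?_
    filter_upwards [hderiv 0 zero_le] with n hn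
    simpa only [norm_iteratedFDeriv_zero] using hn x
  · simpa only [Nat.cofinite_eq_atTop] using hderiv

theorem contDiff_smul_of_tsupport_subset {n : ℕ∞ω} {χ : E → ℝ} {f : E → F} {O : Set E}
    (hO : IsOpen O) (hχ : ContDiff ℝ n χ) (hχO : tsupport χ ⊆ O) (hf : ContDiffOn ℝ n f O) :
    ContDiff ℝ n fun x => χ x • f x := by
  refine contDiff_iff_contDiffAt.2 fun x => ?_
  by_cases hx : x ∈ tsupport χ
  · exact hχ.contDiffAt.smul (hf.contDiffAt (hO.mem_nhds (hχO hx)))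
  · refine contDiffAt_const (c := (0 : F)) |>.congr_of_eventuallyEq ?_
    filter_upwards [notMem_tsupport_iff_eventuallyEq.1 hx] with y hy
    simp only [hy, Pi.zero_apply, zero_smul]

theorem exists_bound_iteratedFDeriv_of_hasCompactSupport {f : E → F} (hf : ContDiff ℝ N f)
    (hsupp : HasCompactSupport f) {k : ℕ} (hk : k ≤ N) :
    ∃ C, ∀ x, ‖iteratedFDeriv ℝ k f x‖ ≤ C :=
  (hsupp.iteratedFDeriv k).exists_bound_of_continuous
    (hf.continuous_iteratedFDeriv (by exact_mod_cast hk))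

theorem exists_pos_forall_contDiffOn_tsum_smul [FiniteDimensional ℝ E] [CompleteSpace F]
    {O : Set E} (hO : IsOpen O) {f : ℕ → E → F} (hf : ∀ n, ContDiffOn ℝ N (f n) O) :
    ∃ c : ℕ → ℝ, (∀ n, 0 < c n) ∧ ∀ d : ℕ → ℝ, (∀ n, |d n| ≤ c n) →
      (∀ x ∈ O, Summable fun n => d n • f n x) ∧
      ContDiffOn ℝ N (fun x => ∑' n, d n • f n x) O := by
  have : ProperSpace E := FiniteDimensional.proper ℝ E
  obtain ⟨t, b, ht, hbO, hcover⟩ := exists_countable_contDiffBump_cover hO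
  have : Countable t := ht.to_subtype
  let g : t → ℕ → E → F := fun z n x => b z x • f n x
  have hg : ∀ z n, ContDiff ℝ N (g z n) := fun z n =>
    contDiff_smul_of_tsupport_subset hO (b z).contDiff ((b z).tsupport_eq.trans_subset (hbO z z.2))
      (hf n)
  have hbound : ∀ z n, ∀ k : ℕ, k ≤ N → ∃ C, ∀ x, ‖iteratedFDeriv ℝ k (g z n) x‖ ≤ C :=
    fun z n _ hk => exists_bound_iteratedFDeriv_of_hasCompactSupport (hg z n)
      (b z).hasCompactSupport.smul_right hk
  obtain ⟨c, hc_pos, hc⟩ := exists_pos_forall_contDiff_tsum_smul hg hbound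
  refine ⟨c, hc_pos, fun d hd => ?_⟩
  have hlocal : ∀ x ∈ O, ∃ z : t, ∀ᶠ y in 𝓝 x, ∀ n, g z n y = f n y := by
    intro x hx
    obtain ⟨z, hz, hxz⟩ := mem_iUnion₂.1 (hcover hx)
    refine ⟨⟨z, hz⟩, ?_⟩
    filter_upwards [(b z).eventuallyEq_one_of_mem_ball hxz] with y hy n
    simp only [g, hy, Pi.one_apply, one_smul]
  constructor
  · intro x hx
    obtain ⟨z, hz⟩ := hlocal x hx
    simpa only [hz.self_of_nhds] using (hc d hd z).1 x
  · intro x hx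
    obtain ⟨z, hz⟩ := hlocal x hx
    refine ((hc d hd z).2.contDiffAt.congr_of_eventuallyEq ?_).contDiffWithinAt
    filter_upwards [hz] with y hy
    simp only [hy]

end SmallCoefficients

theorem monotone_tsum_sub_apply {ι α : Type*} [Preorder α] {f : ι → α → ℝ}
    (hf : ∀ i, Monotone (f i)) (hsum : ∀ t, Summable fun i => f i t) (i : ι) :
    Monotone fun t => (∑' j, f j t) - f i t := by
  intro s t hst
  have hincr : f i t - f i s ≤ ∑' j, (f j t - f j s) :=
    ((hsum t).sub (hsum s)).le_tsum i fun j _ => sub_nonneg.2 (hf j hst)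
  rw [(hsum t).tsum_sub (hsum s)] at hincr
  change (∑' j, f j s) - f i s ≤ (∑' j, f j t) - f i t
  linarith

theorem deriv_le_deriv_tsum_of_monotone {ι : Type*} {f : ι → ℝ → ℝ}
    (hf : ∀ i, Monotone (f i)) (hsum : ∀ t, Summable fun i => f i t) {t : ℝ} {i : ι}
    (hfi : DifferentiableAt ℝ (f i) t)
    (hdiff : DifferentiableAt ℝ (fun s => ∑' j, f j s) t) :
    deriv (f i) t ≤ deriv (fun s => ∑' j, f j s) t := by
  have hnonneg := (monotone_tsum_sub_apply hf hsum i).deriv_nonneg (x := t)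
  rwa [deriv_fun_sub hdiff hfi, sub_nonneg] at hnonneg

section FlatKInfty

open scoped ContDiff

/-- Smooth comparison functions of class `𝒦∞` with positive derivative on `(0, ∞)` and all
derivatives vanishing at `0`. They are encoded as functions on `ℝ` that are `0` on `(-∞, 0]`, so
that global smoothness contains the flatness at `0`. -/
structure IsFlatKInfty (β : ℝ → ℝ) : Prop where
  contDiff : ContDiff ℝ ∞ β
  eq_zero_of_nonpos : ∀ ⦃t⦄, t ≤ 0 → β t = 0
  deriv_pos : ∀ ⦃t⦄, 0 < t → 0 < deriv β t
  tendsto_atTop : Tendsto β atTop atTop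

namespace IsFlatKInfty

variable {β : ℝ → ℝ}

protected theorem differentiable (hβ : IsFlatKInfty β) : Differentiable ℝ β :=
  hβ.contDiff.differentiable (by simp)

protected theorem monotone (hβ : IsFlatKInfty β) : Monotone β := by
  have hleft : MonotoneOn β (Iic 0) := fun s hs t ht _ =>
    (hβ.eq_zero_of_nonpos hs).le.trans_eq (hβ.eq_zero_of_nonpos ht).symm
  have hright : StrictMonoOn β (Ici 0) :=
    strictMonoOn_of_deriv_pos (convex_Ici 0) hβ.differentiable.continuous.continuousOn
      fun t ht => hβ.deriv_pos (by rwa [interior_Ici] at ht)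
  exact hleft.Iic_union_Ici hright.monotoneOn

theorem nonneg (hβ : IsFlatKInfty β) (t : ℝ) : 0 ≤ β t :=
  (hβ.eq_zero_of_nonpos (min_le_right t 0)).symm.trans_le (hβ.monotone (min_le_left t 0))

theorem derivWithin_Ici_pos (hβ : IsFlatKInfty β) {t : ℝ} (ht : 0 < t) :
    0 < derivWithin β (Ici 0) t := by
  rw [derivWithin_of_mem_nhds (Ici_mem_nhds ht)]
  exact hβ.deriv_pos ht

theorem iteratedDerivWithin_Ici_zero (hβ : IsFlatKInfty β) (k : ℕ) :
    iteratedDerivWithin k β (Ici 0) 0 = 0 := by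
  have hk : ContDiffAt ℝ k β 0 := (hβ.contDiff.of_le (by exact_mod_cast le_top)).contDiffAt
  calc iteratedDerivWithin k β (Ici 0) 0
      = iteratedDeriv k β 0 :=
        iteratedDerivWithin_eq_iteratedDeriv (uniqueDiffOn_Ici 0) hk self_mem_Ici
    _ = iteratedDerivWithin k β (Iic 0) 0 :=
        (iteratedDerivWithin_eq_iteratedDeriv (uniqueDiffOn_Iic 0) hk self_mem_Iic).symm
    _ = iteratedDerivWithin k (fun _ => (0 : ℝ)) (Iic 0) 0 :=
        iteratedDerivWithin_congr (fun _ ht => hβ.eq_zero_of_nonpos ht) self_mem_Iic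
    _ = 0 := by simp

theorem id_mul_expNegInvGlue : IsFlatKInfty fun t => t * expNegInvGlue t where
  contDiff := contDiff_id.mul expNegInvGlue.contDiff
  eq_zero_of_nonpos t ht := by rw [expNegInvGlue.zero_of_nonpos ht, mul_zero]
  deriv_pos t ht := by
    have hd : DifferentiableAt ℝ expNegInvGlue t :=
      (expNegInvGlue.contDiff (n := 1)).differentiable one_ne_zero t
    have hderiv : HasDerivAt (fun s => s * expNegInvGlue s)
        (1 * expNegInvGlue t + t * deriv expNegInvGlue t) t :=
      (hasDerivAt_id t).mul hd.hasDerivAt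
    rw [hderiv.deriv, one_mul]
    exact add_pos_of_pos_of_nonneg (expNegInvGlue.pos_of_pos ht)
      (mul_nonneg ht.le expNegInvGlue.monotone.deriv_nonneg)
  tendsto_atTop := by
    refine tendsto_atTop_mono' _ ?_
      (tendsto_id.atTop_mul_const (expNegInvGlue.pos_of_pos one_pos))
    filter_upwards [eventually_ge_atTop 1] with t ht
    exact mul_le_mul_of_nonneg_left (expNegInvGlue.monotone ht) (zero_le_one.trans ht)

theorem tsum_smul_comp_sub (hβ : IsFlatKInfty β) {d τ : ℕ → ℝ} (hd : ∀ n, 0 < d n)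
    (hτ : ∀ n, 0 ≤ τ n) (hτ_lim : Tendsto τ atTop (𝓝 0))
    (hsum : ∀ t, Summable fun n => d n • β (t - τ n))
    (hsmooth : ContDiff ℝ ∞ fun t => ∑' n, d n • β (t - τ n)) :
    IsFlatKInfty fun t => ∑' n, d n • β (t - τ n) where
  contDiff := hsmooth
  eq_zero_of_nonpos t ht := by
    have hterm : ∀ n, β (t - τ n) = 0 := fun n =>
      hβ.eq_zero_of_nonpos (sub_nonpos.2 (ht.trans (hτ n)))
    simp only [hterm, smul_zero, tsum_zero]
  deriv_pos t ht := by
    obtain ⟨n, hn⟩ := (hτ_lim.eventually_lt_const ht).exists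
    have hterm : HasDerivAt (fun s => d n • β (s - τ n)) (d n • deriv β (t - τ n)) t :=
      ((hβ.differentiable _).hasDerivAt.comp_sub_const t (τ n)).const_smul (d n)
    have hmono : ∀ j, Monotone fun s => d j • β (s - τ j) := fun j r s hrs =>
      smul_le_smul_of_nonneg_left (hβ.monotone (sub_le_sub_right hrs _)) (hd j).le
    calc 0 < d n • deriv β (t - τ n) := smul_pos (hd n) (hβ.deriv_pos (sub_pos.2 hn))
      _ = deriv (fun s => d n • β (s - τ n)) t := hterm.deriv.symm
      _ ≤ deriv (fun s => ∑' j, d j • β (s - τ j)) t :=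
        deriv_le_deriv_tsum_of_monotone hmono hsum hterm.differentiableAt
          (hsmooth.differentiable (by simp) t)
  tendsto_atTop := by
    have hterm : Tendsto (fun t => d 0 • β (t - τ 0)) atTop atTop :=
      (hβ.tendsto_atTop.comp (tendsto_atTop_add_const_right _ _ tendsto_id)).const_mul_atTop (hd 0)
    exact tendsto_atTop_mono
      (fun t => (hsum t).le_tsum 0 fun n _ => smul_nonneg (hd n).le (hβ.nonneg _)) hterm

end IsFlatKInfty

theorem contDiffOn_comp_of_eq_zero_of_le {E F : Type*} [NormedAddCommGroup E] [NormedSpace ℝ E]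
    [NormedAddCommGroup F] [NormedSpace ℝ F] {n : ℕ∞ω} {φ : ℝ → F} {ε : ℝ} (hε : 0 < ε)
    (hφ : ContDiff ℝ n φ) (hφ_zero : ∀ t ≤ ε, φ t = 0) {V : E → ℝ} {O : Set E} (hO : IsOpen O)
    (hVc : ContinuousOn V O) (hVsm : ContDiffOn ℝ n V (O ∩ V ⁻¹' Ioi 0)) :
    ContDiffOn ℝ n (fun x => φ (V x)) O := by
  intro x hx
  refine ContDiffAt.contDiffWithinAt ?_
  rcases lt_or_ge 0 (V x) with hpos | hnonpos
  · have hmem : O ∩ V ⁻¹' Ioi 0 ∈ 𝓝 x :=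
      (hVc.isOpen_inter_preimage hO isOpen_Ioi).mem_nhds ⟨hx, hpos⟩
    exact hφ.contDiffAt.comp x (hVsm.contDiffAt hmem)
  · have hsmall : ∀ᶠ y in 𝓝 x, V y < ε :=
      (hVc.continuousAt (hO.mem_nhds hx)).eventually_lt_const (hnonpos.trans_lt hε)
    refine contDiffAt_const (c := (0 : F)) |>.congr_of_eventuallyEq ?_
    filter_upwards [hsmall] with y hy
    exact hφ_zero _ hy.le

theorem smoothing_composition_general {E : Type*} [NormedAddCommGroup E] [NormedSpace ℝ E]
    [FiniteDimensional ℝ E] {N : ℕ∞} {O : Set E} (hO : IsOpen O) {V : E → ℝ}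
    (hVc : ContinuousOn V O) (hVsm : ContDiffOn ℝ N V (O ∩ V ⁻¹' Ioi 0)) :
    ∃ β : ℝ → ℝ, IsFlatKInfty β ∧ ContDiffOn ℝ N (fun x => β (V x)) O := by
  obtain ⟨ρ, hρ⟩ : ∃ ρ, IsFlatKInfty ρ := ⟨_, .id_mul_expNegInvGlue⟩
  let τ : ℕ → ℝ := fun n => 1 / ((n : ℝ) + 1)
  have hτ : ∀ n, 0 < τ n := fun n => Nat.one_div_pos_of_nat
  have hψ : ∀ n, ContDiff ℝ ∞ fun t => ρ (t - τ n) := fun n =>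
    hρ.contDiff.comp (contDiff_id.sub contDiff_const)
  have hψV : ∀ n, ContDiffOn ℝ N (fun x => ρ (V x - τ n)) O := fun n =>
    contDiffOn_comp_of_eq_zero_of_le (hτ n) ((hψ n).of_le (by exact_mod_cast le_top))
      (fun _ ht => hρ.eq_zero_of_nonpos (sub_nonpos.2 ht)) hO hVc hVsm
  obtain ⟨c, hc_pos, hc⟩ := exists_pos_forall_contDiffOn_tsum_smul hO hψV
  obtain ⟨c', hc'_pos, hc'⟩ :=
    exists_pos_forall_contDiffOn_tsum_smul isOpen_univ fun n => (hψ n).contDiffOn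
  let d : ℕ → ℝ := fun n => min (c n) (c' n)
  have hd : ∀ n, 0 < d n := fun n => lt_min (hc_pos n) (hc'_pos n)
  have habs : ∀ n, |d n| = d n := fun n => abs_of_pos (hd n)
  obtain ⟨-, hW⟩ := hc d fun n => (habs n).trans_le (min_le_left _ _)
  obtain ⟨hsum, hβ⟩ := hc' d fun n => (habs n).trans_le (min_le_right _ _)
  exact ⟨_, hρ.tsum_smul_comp_sub hd (fun n => (hτ n).le) tendsto_one_div_add_atTop_nhds_zero_nat
    (fun t => hsum t (mem_univ t)) (contDiffOn_univ.1 hβ), hW⟩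

end FlatKInfty

/-- Lemma 3.6, after [LSW, Lemma 4.3]: smoothing a continuous
function vanishing exactly on a relatively closed set `𝒜 ⊆ O` and smooth off `𝒜`,
by composing with a suitable smooth `β` flat at `0`. -/
theorem smoothing_composition {m : ℕ} (O 𝒜 : Set (X m)) (hO : IsOpen O)
    (h𝒜O : 𝒜 ⊆ O) (hclosed : O ∩ closure 𝒜 ⊆ 𝒜)
    (V : X m → ℝ) (hVc : ContinuousOn V O) (hVsm : ContDiffOn ℝ (⊤ : ℕ∞) V (O \ 𝒜))
    (hV0 : ∀ x ∈ 𝒜, V x = 0) (hVpos : ∀ x ∈ O \ 𝒜, 0 < V x) :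
    ∃ β : ℝ → ℝ, ContDiffOn ℝ (⊤ : ℕ∞) β (Ici 0) ∧ (∀ t ∈ Ici (0:ℝ), 0 ≤ β t) ∧
      (∀ k : ℕ, iteratedDerivWithin k β (Ici 0) 0 = 0) ∧
      Tendsto β atTop atTop ∧ (∀ t > (0:ℝ), 0 < derivWithin β (Ici 0) t) ∧
      ContDiffOn ℝ (⊤ : ℕ∞) (fun x => β (V x)) O := by
  have hoff : O ∩ V ⁻¹' Ioi 0 ⊆ O \ 𝒜 := fun x hx => ⟨hx.1, fun h => hx.2.ne' (hV0 x h)⟩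
  obtain ⟨β, hβ, hW⟩ := smoothing_composition_general hO hVc (hVsm.mono hoff)
  exact ⟨β, hβ.contDiff.contDiffOn, fun t _ => hβ.nonneg t, hβ.iteratedDerivWithin_Ici_zero,
    hβ.tendsto_atTop, fun _ ht => hβ.derivWithin_Ici_pos ht, hW⟩

end DI
end
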